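/- If S_N obeys the (usual) Edgeworth expansion of order r, then for every nonzero resonant point t one has E[e^{itS_N}] = o(σ_N^{−(r−1)}) as N → ∞. -/

import Mathlib

open MeasureTheory ProbabilityTheory Filter Finset
open scoped ENNReal Topology

noncomputable section

namespace EdgeworthMC

variable {Ω E : Type*} [MeasurableSpace Ω] [MeasurableSpace E]

/-- The standard Gaussian density `𝔤(u) = (2π)^{-1/2} e^{-u²/2}`. -/
def gaussDensity (u : ℝ) : ℝ := (Real.sqrt (2 * Real.pi))⁻¹ * Real.exp (-u ^ 2 / 2)

/-- `UEChain μ X κ C` : the process `X` is a Markov chain (with respect to the probability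
measure `μ`) with transition kernels `κ n` from the state at time `n` to the state at time
`n+1`, and the chain is uniformly elliptic with ellipticity constant `C`:
`C⁻¹ ℙ(X_{n+1} ∈ A) ≤ ℙ(X_{n+1} ∈ A | X_n = x) ≤ C ℙ(X_{n+1} ∈ A)` for a.e. `x`. -/
def UEChain (μ : Measure Ω) (X : ℕ → Ω → E) (κ : ℕ → Kernel E E) (C : ℝ) : Prop :=
  IsProbabilityMeasure μ ∧
  (∀ n, Measurable (X n)) ∧
  (∀ n, IsMarkovKernel (κ n)) ∧
  (∀ n (A : Set E), MeasurableSet A →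
      (μ[fun ω => A.indicator (fun _ => (1 : ℝ)) (X (n + 1) ω) |
          ⨆ i : Fin (n + 1), MeasurableSpace.comap (X i) (inferInstance : MeasurableSpace E)]
        =ᵐ[μ] fun ω => (κ n (X n ω) A).toReal)) ∧
  (∀ n (A : Set E), MeasurableSet A → ∀ᵐ ω ∂μ,
      κ n (X n ω) A ≤ ENNReal.ofReal C * Measure.map (X (n + 1)) μ A ∧
      Measure.map (X (n + 1)) μ A ≤ ENNReal.ofReal C * κ n (X n ω) A)

/-- Partial sums `S_N = ∑_{n=1}^N f_n(X_n)`. -/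
def S (X : ℕ → Ω → E) (f : ℕ → E → ℤ) (N : ℕ) (ω : Ω) : ℤ :=
  ∑ n ∈ Finset.Icc 1 N, f n (X n ω)

/-- `V_N = Var(S_N)`. -/
def VN (μ : Measure Ω) (X : ℕ → Ω → E) (f : ℕ → E → ℤ) (N : ℕ) : ℝ :=
  variance (fun ω => ((S X f N ω : ℝ))) μ

/-- `σ_N = √V_N`. -/
def sigN (μ : Measure Ω) (X : ℕ → Ω → E) (f : ℕ → E → ℤ) (N : ℕ) : ℝ :=
  Real.sqrt (VN μ X f N)

/-- `a_N = 𝔼(S_N)`. -/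
def meanS (μ : Measure Ω) (X : ℕ → Ω → E) (f : ℕ → E → ℤ) (N : ℕ) : ℝ :=
  ∫ ω, ((S X f N ω : ℝ)) ∂μ

/-- The second largest value among the (finitely many) values of `p`, counted with
multiplicity: it equals `min_j max_{j' ≠ j} p j'`. -/
def secondLargest {ι : Type*} (p : ι → ℝ) : ℝ := ⨅ j, sSup (p '' {j}ᶜ)

/-- `q_n(m)` : the second largest value among `ℙ(Y_n ≡ j mod m)`, `j = 0,…,m-1`. -/
def qres (μ : Measure Ω) (X : ℕ → Ω → E) (f : ℕ → E → ℤ) (n m : ℕ) : ℝ :=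
  secondLargest (fun j : ZMod m => (μ {ω | ((f n (X n ω) : ZMod m)) = j}).toReal)

/-- `M_N = min_{2 ≤ m ≤ 2K} ∑_{n=1}^N q_n(m)`. -/
def MN (μ : Measure Ω) (X : ℕ → Ω → E) (f : ℕ → E → ℤ) (K N : ℕ) : ℝ :=
  sInf ((fun m => ∑ n ∈ Finset.Icc 1 N, qres μ X f n m) '' (Set.Icc 2 (2 * K)))

/-- `S_N` obeys the Edgeworth expansion of order `r` : there are polynomials `P_{b,N}`,
with coefficients uniformly bounded in `N` and degrees not depending on `N`, such that
uniformly in `k ∈ ℤ`,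
`ℙ(S_N = k) = ∑_{b=1}^r σ_N^{-b} P_{b,N}(k_N) 𝔤(k_N) + o(σ_N^{-r})`
where `k_N = (k - 𝔼 S_N)/σ_N`. -/
def Edgeworth (μ : Measure Ω) (X : ℕ → Ω → E) (f : ℕ → E → ℤ) (r : ℕ) : Prop :=
  ∃ (D : ℕ) (Cb : ℝ) (P : ℕ → ℕ → Polynomial ℝ),
    (∀ b N, (P b N).natDegree ≤ D) ∧
    (∀ b N i, |(P b N).coeff i| ≤ Cb) ∧
    ∀ ε > 0, ∃ N₀, ∀ N ≥ N₀, ∀ k : ℤ,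
      |(μ {ω | S X f N ω = k}).toReal -
          ∑ b ∈ Finset.Icc 1 r, (sigN μ X f N)⁻¹ ^ b *
            (P b N).eval (((k : ℝ) - meanS μ X f N) / sigN μ X f N) *
            gaussDensity (((k : ℝ) - meanS μ X f N) / sigN μ X f N)|
        ≤ ε * (sigN μ X f N)⁻¹ ^ r

/-- The σ-algebra generated by `X_{j 1}, …, X_{j ℓ}`. -/
def sigmaOf (X : ℕ → Ω → E) {ℓ : ℕ} (j : Fin ℓ → ℕ) : MeasurableSpace Ω :=
  ⨆ i : Fin ℓ, MeasurableSpace.comap (X (j i)) (inferInstance : MeasurableSpace E)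

/-- Conditional probability of the event `s` given the σ-algebra `m`. -/
def condProb (μ : Measure Ω) (m : MeasurableSpace Ω) (s : Set Ω) : Ω → ℝ :=
  μ[s.indicator (fun _ => (1 : ℝ)) | m]

/-- `S_N` obeys the Edgeworth expansion of order `r` in a conditionally stable way:
for every `ℓ`, the order `r` Edgeworth expansion holds for the conditional law of `S_N`
given `X_{j_1},…,X_{j_ℓ}`, with error term `o_ℓ(σ_N^{-r})` and polynomial coefficient
bounds depending only on `ℓ` (and `r`), uniformly over all choices of indices
`1 ≤ j_1,…,j_ℓ ≤ N`. -/
def CondStableEdgeworth (μ : Measure Ω) (X : ℕ → Ω → E) (f : ℕ → E → ℤ) (r : ℕ) : Prop :=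
  ∀ ℓ : ℕ, ∃ (D : ℕ) (Cb : ℝ), ∀ ε > 0, ∃ N₀, ∀ N ≥ N₀,
    ∀ j : Fin ℓ → ℕ, (∀ i, j i ∈ Finset.Icc 1 N) →
      ∃ P : ℕ → Ω → Polynomial ℝ,
        (∀ b ω, (P b ω).natDegree ≤ D) ∧
        (∀ b ω i, |(P b ω).coeff i| ≤ Cb) ∧
        ∀ᵐ ω ∂μ, ∀ k : ℤ,
          |condProb μ (sigmaOf X j) {ω' | S X f N ω' = k} ω -
              ∑ b ∈ Finset.Icc 1 r, (sigN μ X f N)⁻¹ ^ b *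
                (P b ω).eval (((k : ℝ) -
                    (μ[fun ω' => ((S X f N ω' : ℝ)) | sigmaOf X j]) ω) / sigN μ X f N) *
                gaussDensity (((k : ℝ) -
                    (μ[fun ω' => ((S X f N ω' : ℝ)) | sigmaOf X j]) ω) / sigN μ X f N)|
            ≤ ε * (sigN μ X f N)⁻¹ ^ r

/-- `t` is a resonant point: `t = 2πl/m` with `0 < m ≤ 2K`, `0 ≤ l < m`. -/
def IsResonant (K : ℕ) (t : ℝ) : Prop :=
  ∃ l m : ℕ, 0 < m ∧ m ≤ 2 * K ∧ l < m ∧ t = 2 * Real.pi * l / m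

/-- The conditional characteristic function `𝔼[e^{itS_N} | X_{j_1},…,X_{j_ℓ}]`. -/
def condChar (μ : Measure Ω) (X : ℕ → Ω → E) (f : ℕ → E → ℤ) (t : ℝ) (N : ℕ)
    {ℓ : ℕ} (j : Fin ℓ → ℕ) : Ω → ℂ :=
  μ[fun ω => Complex.exp (Complex.I * (t : ℂ) * ((S X f N ω : ℤ) : ℂ)) | sigmaOf X j]

end EdgeworthMC

/-!
Write `φ_N(t) = 𝔼[e^{itS_N}]`. Uniform ellipticity controls `φ_N` near `t` through one quantity
`D_N`, which measures how far the variables `e^{itY_n}` are from being constant: the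
characteristic function decays, `|φ_N(t)| ≤ e^{c(1 - D_N)}`, and shifting the frequency by `t`
costs little, `|φ_N(t + z)| ≤ e^{L D_N} |φ_N(z)|` for complex `z` near `0`. If `D_N` exceeds a large
multiple of `log σ_N`, the decay alone suffices. Otherwise `H(z) = φ_N(t + z/σ_N) / φ_N(z/σ_N)` is
holomorphic and bounded by a power of `σ_N` on a disc of radius proportional to `σ_N`; so `H` is
almost a polynomial of bounded degree on `[0, 1]`, and `H(0) = φ_N(t)` is a weighted mean of `H`
over `[0, 1]` up to an arbitrarily high power of `σ_N⁻¹`. That mean is the expectation of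
`e^{itS_N}` times a rapidly decaying function of `(S_N - 𝔼 S_N)/σ_N`, hence a lattice sum into
which the Edgeworth expansion can be inserted. The Gaussian main terms oscillate with phase
`e^{it} ≠ 1` and are negligible by repeated summation by parts; the `o(σ_N^{-r})` error is summed
over a window of about `σ_N` lattice points, which is where one power of `σ_N` is lost.
-/

namespace EdgeworthMC

variable {Ω E : Type*} [MeasurableSpace Ω] [MeasurableSpace E]

lemma measure_le_of_forall_finset_countableBasis {F : Type*} [TopologicalSpace F]
    [SecondCountableTopology F] [MeasurableSpace F]
    {ρ₁ ρ₂ : Measure F} [ρ₂.OuterRegular]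
    (h : ∀ s : Finset (TopologicalSpace.countableBasis F),
      ρ₁ (⋃ b ∈ s, (b : Set F)) ≤ ρ₂ (⋃ b ∈ s, (b : Set F))) : ρ₁ ≤ ρ₂ := by
  have hopen : ∀ O : Set F, IsOpen O → ρ₁ O ≤ ρ₂ O := by
    intro O hO
    let I : Type _ := {b : TopologicalSpace.countableBasis F // (b : Set F) ⊆ O}
    let U : Finset I → Set F := fun s => ⋃ b ∈ s, (b.1 : Set F)
    have hU : Monotone U := fun s s' hs => Set.biUnion_subset_biUnion_left hs
    have hOU : O = ⋃ s, U s := by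
      rw [← Set.iUnion_eq_iUnion_finset]
      refine Set.Subset.antisymm (fun x hx => ?_) (Set.iUnion_subset fun b => b.2)
      obtain ⟨b, hb, hxb, hbO⟩ :=
        (TopologicalSpace.isBasis_countableBasis F).exists_subset_of_mem_open hx hO
      exact Set.mem_iUnion.2 ⟨⟨⟨b, hb⟩, hbO⟩, hxb⟩
    rw [hOU, hU.measure_iUnion, hU.measure_iUnion]
    refine iSup_mono fun s => ?_
    have hUs : U s = ⋃ b ∈ s.map (Function.Embedding.subtype _), (b : Set F) := by
      ext; simp [U, I]
    exact hUs ▸ h _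
  refine Measure.le_iff.2 fun A _ => ?_
  rw [A.measure_eq_iInf_isOpen ρ₂]
  exact le_iInf₂ fun O hAO => le_iInf fun hO => (measure_mono hAO).trans (hopen O hO)

/-- One uniformly elliptic transition `η` from the law `ν` to the law `ν'`. -/
def EllipticStep (ν : Measure E) (η : Kernel E E) (ν' : Measure E) (C : ℝ) : Prop :=
  ∀ A : Set E, MeasurableSet A → ∀ᵐ x ∂ν,
    η x A ≤ ENNReal.ofReal C * ν' A ∧ ν' A ≤ ENNReal.ofReal C * η x A

section EllipticStep

variable {ν ν' : Measure E} {η : Kernel E E} {C : ℝ}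

/- `E` need not be countably generated, so the exceptional null set can only be made independent of
the event after pushing forward to a second countable space. -/
lemma EllipticStep.ae_map_le [IsFiniteKernel η] [IsFiniteMeasure ν'] (h : EllipticStep ν η ν' C)
    {F : Type*} [TopologicalSpace F] [TopologicalSpace.PseudoMetrizableSpace F]
    [SecondCountableTopology F] [MeasurableSpace F] [BorelSpace F] {v : E → F}
    (hv : Measurable v) :
    ∀ᵐ x ∂ν, (η x).map v ≤ ENNReal.ofReal C • ν'.map v ∧
      ν'.map v ≤ ENNReal.ofReal C • (η x).map v := by
  have hmeas : ∀ s : Finset (TopologicalSpace.countableBasis F),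
      MeasurableSet (⋃ b ∈ s, (b : Set F)) := fun s =>
    s.measurableSet_biUnion fun b _ =>
      (TopologicalSpace.isOpen_of_mem_countableBasis b.2).measurableSet
  filter_upwards [ae_all_iff.2 fun s => h _ (hv (hmeas s))] with x hx
  have hreg : ∀ (ρ : Measure E) [IsFiniteMeasure ρ],
      (ENNReal.ofReal C • ρ.map v).OuterRegular := fun ρ _ =>
    Measure.OuterRegular.smul (ρ.map v) ENNReal.ofReal_ne_top
  have := hreg ν'
  have := hreg (η x)
  constructor <;>
  · refine measure_le_of_forall_finset_countableBasis fun s => ?_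
    rw [Measure.smul_apply, Measure.map_apply hv (hmeas s), Measure.map_apply hv (hmeas s)]
    first | exact (hx s).1 | exact (hx s).2

lemma EllipticStep.ae_ae (h : EllipticStep ν η ν' C) {p : E → Prop} (hp : ∀ᵐ y ∂ν', p y) :
    ∀ᵐ x ∂ν, ∀ᵐ y ∂(η x), p y := by
  obtain ⟨T, hpT, hT, hT0⟩ := exists_measurable_superset_of_null (ae_iff.1 hp)
  filter_upwards [h T hT] with x hx
  refine measure_mono_null hpT (le_bot_iff.1 ?_)
  simpa [hT0] using hx.1

lemma integral_le_mul_integral_of_le_smul {α : Type*} [MeasurableSpace α] {ρ₁ ρ₂ : Measure α}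
    {φ : α → ℝ} (hC : 0 ≤ C) (h : ρ₁ ≤ ENNReal.ofReal C • ρ₂) (hφ : ∀ x, 0 ≤ φ x)
    (hi : Integrable φ ρ₂) : ∫ x, φ x ∂ρ₁ ≤ C * ∫ x, φ x ∂ρ₂ := by
  refine (integral_mono_measure h (ae_of_all _ hφ)
    (hi.smul_measure ENNReal.ofReal_ne_top)).trans_eq ?_
  rw [integral_smul_measure, ENNReal.toReal_ofReal hC, smul_eq_mul]

lemma norm_integral_sub_integral_le_of_le {α F : Type*} [MeasurableSpace α]
    [NormedAddCommGroup F] [NormedSpace ℝ F] {ρ₁ ρ₂ : Measure α} [IsFiniteMeasure ρ₂]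
    (h : ρ₁ ≤ ρ₂) {u : α → F} {R : ℝ} (hu : Integrable u ρ₂)
    (hR : ∀ᵐ x ∂ρ₂, ‖u x‖ ≤ R) :
    ‖∫ x, u x ∂ρ₂ - ∫ x, u x ∂ρ₁‖ ≤ R * (ρ₂.real Set.univ - ρ₁.real Set.univ) := by
  have := isFiniteMeasure_of_le ρ₂ h
  have hsplit : ρ₂ - ρ₁ + ρ₁ = ρ₂ := Measure.sub_add_cancel_of_le h
  have hsub : ρ₂ - ρ₁ ≤ ρ₂ := Measure.sub_le
  have hint : ∫ x, u x ∂ρ₂ = ∫ x, u x ∂(ρ₂ - ρ₁) + ∫ x, u x ∂ρ₁ := by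
    rw [← integral_add_measure (hu.mono_measure hsub) (hu.mono_measure h), hsplit]
  have hmass : ρ₂.real Set.univ - ρ₁.real Set.univ = (ρ₂ - ρ₁).real Set.univ := by
    rw [sub_eq_iff_eq_add, ← measureReal_add_apply, hsplit]
  rw [hint, add_sub_cancel_right, hmass]
  exact norm_integral_le_of_norm_le_const (ae_mono hsub hR)

/-- The integral operator of a kernel acting on complex functions. -/
def kernelOp (η : Kernel E E) (u : E → ℂ) (x : E) : ℂ := ∫ y, u y ∂(η x)

lemma measurable_kernelOp (η : Kernel E E) {u : E → ℂ} (hu : Measurable u) :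
    Measurable (kernelOp η u) :=
  (hu.stronglyMeasurable.integral_kernel (κ := η)).measurable

lemma norm_kernelOp_le_of_ae [IsMarkovKernel η] {u : E → ℂ} {R : ℝ} {x : E}
    (hR : ∀ᵐ y ∂(η x), ‖u y‖ ≤ R) : ‖kernelOp η u x‖ ≤ R := by
  simpa [kernelOp] using norm_integral_le_of_norm_le_const hR

lemma kernelOp_add {u v : E → ℂ} {x : E} (hu : Integrable u (η x)) (hv : Integrable v (η x)) :
    kernelOp η (fun y => u y + v y) x = kernelOp η u x + kernelOp η v x :=
  integral_add hu hv

lemma kernelOp_const_mul (c : ℂ) (u : E → ℂ) (x : E) :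
    kernelOp η (fun y => c * u y) x = c * kernelOp η u x :=
  integral_const_mul c u

/- Doeblin minorization: `η x ≥ C⁻¹ ν'`, and the remaining mass of `η x` is `1 - C⁻¹`. -/
lemma EllipticStep.exists_norm_kernelOp_sub_le [IsMarkovKernel η] [IsProbabilityMeasure ν']
    (hC : 0 < C) (h : EllipticStep ν η ν' C) {v : E → ℂ} (hv : Measurable v) {c : ℂ} {R : ℝ}
    (hR : ∀ᵐ y ∂ν', ‖v y - c‖ ≤ R) :
    ∃ c' : ℂ, ‖c' - c‖ ≤ C⁻¹ * R ∧ ∀ᵐ x ∂ν, ‖kernelOp η v x - c'‖ ≤ (1 - C⁻¹) * R := by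
  refine ⟨c + C⁻¹ * ∫ y, (v y - c) ∂ν', ?_, ?_⟩
  · rw [add_sub_cancel_left, norm_mul, Complex.norm_of_nonneg (by positivity)]
    gcongr
    simpa using norm_integral_le_of_norm_le_const hR
  filter_upwards [h.ae_map_le hv, h.ae_ae hR] with x hx hRx
  have hCinv : ENNReal.ofReal C⁻¹ • ν'.map v ≤ (η x).map v := by
    refine (smul_le_smul_left (ENNReal.ofReal C⁻¹) hx.2).trans_eq ?_
    rw [smul_smul, ← ENNReal.ofReal_mul (by positivity), inv_mul_cancel₀ hC.ne']
    simp
  have hmap : ∀ ρ : Measure E, ∫ z, (z - c) ∂(ρ.map v) = ∫ y, (v y - c) ∂ρ := fun ρ =>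
    integral_map hv.aemeasurable (by fun_prop)
  have hRx' : ∀ᵐ z ∂((η x).map v), ‖z - c‖ ≤ R :=
    (ae_map_iff hv.aemeasurable (measurableSet_le (by fun_prop) measurable_const)).2 hRx
  have hi : Integrable (fun z : ℂ => z - c) ((η x).map v) :=
    Integrable.of_bound (by fun_prop) R hRx'
  have hiv : Integrable v (η x) := by
    have := ((integrable_map_measure (by fun_prop) hv.aemeasurable).1 hi).add (integrable_const c)
    exact this.congr (ae_of_all _ fun y => by simp)
  have hmass : ((η x).map v).real Set.univ = 1 ∧
      (ENNReal.ofReal C⁻¹ • ν'.map v).real Set.univ = C⁻¹ := by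
    constructor <;> simp [measureReal_def, Measure.map_apply hv MeasurableSet.univ, hC.le]
  have key := norm_integral_sub_integral_le_of_le hCinv hi hRx'
  rw [integral_smul_measure, hmap, hmap, integral_sub hiv (integrable_const c), hmass.1, hmass.2,
    mul_comm] at key
  simpa [kernelOp, sub_sub, hC.le] using key

end EllipticStep

/-- The circular variance `1 - ‖∫ g‖²` of a unit-modulus function `g` under a probability law: it
measures how far `g` is from being constant. -/
def circVariance (g : E → ℂ) (ρ : Measure E) : ℝ := 1 - ‖∫ y, g y ∂ρ‖ ^ 2

section CircVariance

variable {g : E → ℂ}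

lemma integrable_of_norm_eq_one {ρ : Measure E} [IsFiniteMeasure ρ] (hg : Measurable g)
    (hg1 : ∀ y, ‖g y‖ = 1) : Integrable g ρ :=
  Integrable.of_bound hg.aestronglyMeasurable 1 (ae_of_all _ fun y => (hg1 y).le)

lemma integrable_norm_sub_sq {ρ : Measure E} [IsFiniteMeasure ρ] (hg : Measurable g)
    (hg1 : ∀ y, ‖g y‖ = 1) (c : ℂ) : Integrable (fun y => ‖g y - c‖ ^ 2) ρ := by
  refine Integrable.of_bound (by fun_prop) ((1 + ‖c‖) ^ 2) (ae_of_all _ fun y => ?_)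
  rw [Real.norm_of_nonneg (by positivity)]
  gcongr
  exact (norm_sub_le _ _).trans_eq (by rw [hg1])

lemma integral_norm_sub_sq {ρ : Measure E} [IsProbabilityMeasure ρ] (hg : Measurable g)
    (hg1 : ∀ y, ‖g y‖ = 1) (c : ℂ) :
    ∫ y, ‖g y - c‖ ^ 2 ∂ρ = circVariance g ρ + ‖∫ y, g y ∂ρ - c‖ ^ 2 := by
  have hi := integrable_of_norm_eq_one (ρ := ρ) hg hg1
  have hre : ∫ y, inner ℝ (g y) c ∂ρ = inner ℝ (∫ y, g y ∂ρ) c := by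
    simpa only [real_inner_comm] using integral_inner hi c
  have hexp : ∀ y, ‖g y - c‖ ^ 2 = (1 + ‖c‖ ^ 2) - 2 * inner ℝ (g y) c := fun y => by
    rw [norm_sub_sq_real, hg1]; ring
  simp only [hexp]
  rw [integral_sub (integrable_const _) ((hi.inner_const c).const_mul 2), integral_const_mul, hre,
    norm_sub_sq_real, circVariance]
  simp only [integral_const, probReal_univ, one_smul]
  ring

lemma exists_integral_norm_sub_sq_le {ρ : Measure E} [IsProbabilityMeasure ρ] (hg : Measurable g)
    (hg1 : ∀ y, ‖g y‖ = 1) : ∃ y₀, ∫ y, ‖g y - g y₀‖ ^ 2 ∂ρ ≤ 2 * circVariance g ρ := by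
  have hsym := integral_norm_sub_sq (ρ := ρ) hg hg1 (∫ y, g y ∂ρ)
  obtain ⟨y₀, hy₀⟩ := exists_le_integral (integrable_norm_sub_sq (ρ := ρ) hg hg1 (∫ y, g y ∂ρ))
  refine ⟨y₀, ?_⟩
  rw [integral_norm_sub_sq hg hg1, norm_sub_rev]
  rw [sub_self, norm_zero] at hsym
  linarith

lemma EllipticStep.circVariance_le {ν ν' : Measure E} {η : Kernel E E} {C : ℝ}
    [IsMarkovKernel η] [IsProbabilityMeasure ν'] (hC : 0 ≤ C) (h : EllipticStep ν η ν' C)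
    (hg : Measurable g) (hg1 : ∀ y, ‖g y‖ = 1) :
    ∀ᵐ x ∂ν, circVariance g ν' ≤ C * circVariance g (η x) := by
  filter_upwards [h.ae_map_le hg] with x hx
  set m := ∫ y, g y ∂(η x) with hm
  have hmap : ∀ ρ : Measure E, ∫ z, ‖z - m‖ ^ 2 ∂(ρ.map g) = ∫ y, ‖g y - m‖ ^ 2 ∂ρ := fun ρ =>
    integral_map hg.aemeasurable (by fun_prop)
  have hi : Integrable (fun z : ℂ => ‖z - m‖ ^ 2) ((η x).map g) :=
    (integrable_map_measure (by fun_prop) hg.aemeasurable).2 (integrable_norm_sub_sq hg hg1 m)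
  have key := integral_le_mul_integral_of_le_smul hC hx.2 (fun z => by positivity) hi
  rw [hmap, hmap, integral_norm_sub_sq hg hg1, integral_norm_sub_sq hg hg1, ← hm, sub_self,
    norm_zero] at key
  nlinarith [sq_nonneg ‖∫ y, g y ∂ν' - m‖]

lemma circVariance_nonneg {ρ : Measure E} [IsProbabilityMeasure ρ] (hg1 : ∀ y, ‖g y‖ = 1) :
    0 ≤ circVariance g ρ := by
  have := norm_integral_le_of_norm_le_const (μ := ρ) (ae_of_all _ fun y => (hg1 y).le)
  rw [probReal_univ, mul_one] at this
  exact sub_nonneg.2 (pow_le_one₀ (norm_nonneg _) this)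

lemma circVariance_le_one (g : E → ℂ) (ρ : Measure E) : circVariance g ρ ≤ 1 :=
  sub_le_self _ (by positivity)

lemma EllipticStep.norm_kernelOp_le_one_sub {ν ν' : Measure E} {η : Kernel E E} {C : ℝ}
    [IsMarkovKernel η] [IsProbabilityMeasure ν'] (hC : 0 < C) (h : EllipticStep ν η ν' C)
    (hg : Measurable g) (hg1 : ∀ y, ‖g y‖ = 1) :
    ∀ᵐ x ∂ν, ‖kernelOp η g x‖ ≤ 1 - (2 * C)⁻¹ * circVariance g ν' := by
  filter_upwards [h.circVariance_le hC.le hg hg1] with x hx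
  have hV : C⁻¹ * circVariance g ν' ≤ circVariance g (η x) := (inv_mul_le_iff₀ hC).2 hx
  have hV' : circVariance g (η x) = 1 - ‖kernelOp η g x‖ ^ 2 := rfl
  rw [mul_inv]
  nlinarith [sq_nonneg (1 - ‖kernelOp η g x‖)]

/- Two elliptic steps: up to a remainder of size `(1 - C⁻¹) B`, the function `η₂ w` is a constant of
size `C⁻¹ B`, and on constants the factor `g` gains. -/
lemma EllipticStep.norm_kernelOp_mul_kernelOp_le {ν₀ ν₁ ν₂ : Measure E} {η₁ η₂ : Kernel E E}
    {C B : ℝ} [IsMarkovKernel η₁] [IsMarkovKernel η₂] [IsProbabilityMeasure ν₁]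
    [IsProbabilityMeasure ν₂] (hC : 0 < C) (h₁ : EllipticStep ν₀ η₁ ν₁ C)
    (h₂ : EllipticStep ν₁ η₂ ν₂ C) (hg : Measurable g) (hg1 : ∀ y, ‖g y‖ = 1) {w : E → ℂ}
    (hw : Measurable w) (hB : ∀ᵐ y ∂ν₂, ‖w y‖ ≤ B) :
    ∀ᵐ x ∂ν₀, ‖kernelOp η₁ (fun y => g y * kernelOp η₂ w y) x‖
      ≤ (1 - (2 * C ^ 2)⁻¹ * circVariance g ν₁) * B := by
  obtain ⟨a, haB, ha⟩ := h₂.exists_norm_kernelOp_sub_le hC hw (c := 0) (by simpa using hB)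
  rw [sub_zero] at haB
  have hη₂w := measurable_kernelOp η₂ hw
  filter_upwards [h₁.norm_kernelOp_le_one_sub hC hg hg1, h₁.ae_ae ha] with x hgx hax
  have hrem : ∀ᵐ y ∂(η₁ x), ‖g y * (kernelOp η₂ w y - a)‖ ≤ (1 - C⁻¹) * B := by
    filter_upwards [hax] with y hy
    rwa [norm_mul, hg1, one_mul]
  have hsplit : kernelOp η₁ (fun y => g y * kernelOp η₂ w y) x
      = a * kernelOp η₁ g x + kernelOp η₁ (fun y => g y * (kernelOp η₂ w y - a)) x := by
    rw [← kernelOp_const_mul, ← kernelOp_add ((integrable_of_norm_eq_one hg hg1).const_mul a)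
      (Integrable.of_bound (by fun_prop) _ hrem)]
    exact congrArg (kernelOp η₁ · x) (funext fun y => by ring)
  calc ‖kernelOp η₁ (fun y => g y * kernelOp η₂ w y) x‖
      ≤ ‖a‖ * ‖kernelOp η₁ g x‖ + (1 - C⁻¹) * B := by
        rw [hsplit, ← norm_mul]
        exact norm_add_le_of_le le_rfl (norm_kernelOp_le_of_ae hrem)
    _ ≤ C⁻¹ * B * (1 - (2 * C)⁻¹ * circVariance g ν₁) + (1 - C⁻¹) * B := by
        have : 0 ≤ C⁻¹ * B := (norm_nonneg a).trans haB
        gcongr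
    _ = (1 - (2 * C ^ 2)⁻¹ * circVariance g ν₁) * B := by
        field_simp; ring

end CircVariance

/-- `backward κ g k n x` is `𝔼[∏_{n < j ≤ n + k} g_j(X_j) | X_n = x]` for the Markov chain `X` with
transition kernels `κ`. -/
def backward (κ : ℕ → Kernel E E) (g : ℕ → E → ℂ) : ℕ → ℕ → E → ℂ
  | 0, _ => fun _ => 1
  | k + 1, n => kernelOp (κ n) (fun y => g (n + 1) y * backward κ g k (n + 1) y)

lemma measurable_backward (κ : ℕ → Kernel E E) {g : ℕ → E → ℂ} (hg : ∀ n, Measurable (g n))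
    (k n : ℕ) : Measurable (backward κ g k n) := by
  induction k generalizing n with
  | zero => exact measurable_const
  | succ k ih => exact measurable_kernelOp _ ((hg _).mul (ih _))

lemma norm_backward_le_pow (κ : ℕ → Kernel E E) [∀ n, IsMarkovKernel (κ n)] {g : ℕ → E → ℂ}
    {R : ℝ} (hR : ∀ n x, ‖g n x‖ ≤ R) (k n : ℕ) (x : E) : ‖backward κ g k n x‖ ≤ R ^ k := by
  induction k generalizing n x with
  | zero => simp [backward]
  | succ k ih =>
    refine norm_kernelOp_le_of_ae (ae_of_all _ fun y => ?_)
    rw [norm_mul, pow_succ']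
    exact mul_le_mul (hR _ _) (ih _ _) (norm_nonneg _) ((norm_nonneg _).trans (hR 0 x))

section Decay

variable {ν : ℕ → Measure E} {κ : ℕ → Kernel E E} {C : ℝ} [∀ n, IsMarkovKernel (κ n)]
  {g : ℕ → E → ℂ}

lemma norm_backward_succ_le (h : ∀ n, EllipticStep (ν n) (κ n) (ν (n + 1)) C)
    (hg1 : ∀ n y, ‖g n y‖ = 1) {k n : ℕ} {b : ℝ}
    (hb : ∀ᵐ x ∂(ν (n + 1)), ‖backward κ g k (n + 1) x‖ ≤ b) :
    ∀ᵐ x ∂(ν n), ‖backward κ g (k + 1) n x‖ ≤ b := by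
  filter_upwards [(h n).ae_ae hb] with x hx
  refine norm_kernelOp_le_of_ae (hx.mono fun y hy => ?_)
  rwa [norm_mul, hg1, one_mul]

variable [∀ n, IsProbabilityMeasure (ν n)]

lemma norm_backward_add_two_le (hC : 0 < C) (h : ∀ n, EllipticStep (ν n) (κ n) (ν (n + 1)) C)
    (hg : ∀ n, Measurable (g n)) (hg1 : ∀ n y, ‖g n y‖ = 1) {k n : ℕ} {b : ℝ}
    (hb : ∀ᵐ x ∂(ν (n + 2)), ‖backward κ g k (n + 2) x‖ ≤ b) :
    ∀ᵐ x ∂(ν n), ‖backward κ g (k + 2) n x‖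
      ≤ (1 - (2 * C ^ 2)⁻¹ * circVariance (g (n + 1)) (ν (n + 1))) * b :=
  (h n).norm_kernelOp_mul_kernelOp_le hC (h (n + 1)) (hg _) (hg1 _)
    ((hg _).mul (measurable_backward κ hg k _))
    (hb.mono fun y hy => by rwa [norm_mul, hg1, one_mul])

/- Consecutive iterates are controlled together: a two-step gain improves only every other bound,
while the product of two consecutive bounds gains at every step. -/
lemma exists_norm_backward_le_mul_le_exp (hC : 1 ≤ C)
    (h : ∀ n, EllipticStep (ν n) (κ n) (ν (n + 1)) C)
    (hg : ∀ n, Measurable (g n)) (hg1 : ∀ n y, ‖g n y‖ = 1) (k n : ℕ) :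
    ∃ b b' : ℝ, 0 ≤ b ∧ b ≤ b' ∧ (∀ᵐ x ∂(ν n), ‖backward κ g (k + 1) n x‖ ≤ b) ∧
      (∀ᵐ x ∂(ν (n + 1)), ‖backward κ g k (n + 1) x‖ ≤ b') ∧
      b * b' ≤ Real.exp (-((2 * C ^ 2)⁻¹ *
        ∑ j ∈ Finset.range k, circVariance (g (n + 1 + j)) (ν (n + 1 + j)))) := by
  induction k generalizing n with
  | zero =>
    have hle : ∀ j m x, ‖backward κ g j m x‖ ≤ 1 := fun j m x =>
      (norm_backward_le_pow κ (fun n y => (hg1 n y).le) j m x).trans_eq (one_pow j)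
    exact ⟨1, 1, zero_le_one, le_rfl, ae_of_all _ (hle _ _), ae_of_all _ (hle _ _), by simp⟩
  | succ k ih =>
    obtain ⟨b, b', hb0, hbb', hb, hb', hprod⟩ := ih (n + 1)
    set q := (2 * C ^ 2)⁻¹ * circVariance (g (n + 1)) (ν (n + 1)) with hq
    have hq1 : q ≤ 1 := mul_le_one₀ (inv_le_one_of_one_le₀ (by nlinarith))
      (circVariance_nonneg (hg1 _)) (circVariance_le_one _ _)
    have hqb : 0 ≤ (1 - q) * b' := mul_nonneg (by linarith) (hb0.trans hbb')
    refine ⟨min b ((1 - q) * b'), b, le_min hb0 hqb, min_le_left _ _, ?_, hb, ?_⟩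
    · filter_upwards [norm_backward_succ_le h hg1 hb,
        norm_backward_add_two_le (zero_lt_one.trans_le hC) h hg hg1 hb'] with x hx₁ hx₂
      exact le_min hx₁ hx₂
    have hsum : (2 * C ^ 2)⁻¹ * ∑ j ∈ Finset.range (k + 1),
          circVariance (g (n + 1 + j)) (ν (n + 1 + j))
        = q + (2 * C ^ 2)⁻¹ * ∑ j ∈ Finset.range k,
          circVariance (g (n + 1 + 1 + j)) (ν (n + 1 + 1 + j)) := by
      simp only [Finset.sum_range_succ', add_zero, mul_add, hq, add_right_comm _ 1, ← add_assoc]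
      exact add_comm _ _
    rw [hsum, neg_add, Real.exp_add]
    calc min b ((1 - q) * b') * b ≤ (1 - q) * b' * b := by gcongr; exact min_le_right _ _
      _ = (1 - q) * (b * b') := by ring
      _ ≤ _ := mul_le_mul (by linarith [Real.add_one_le_exp (-q)]) hprod
        (mul_nonneg hb0 (hb0.trans hbb')) (Real.exp_pos _).le

lemma norm_integral_backward_sq_le_exp (hC : 1 ≤ C)
    (h : ∀ n, EllipticStep (ν n) (κ n) (ν (n + 1)) C)
    (hg : ∀ n, Measurable (g n)) (hg1 : ∀ n y, ‖g n y‖ = 1) (N : ℕ) :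
    ‖∫ x, backward κ g N 0 x ∂(ν 0)‖ ^ 2 ≤ Real.exp ((2 * C ^ 2)⁻¹ *
      (1 - ∑ n ∈ Finset.range N, circVariance (g (n + 1)) (ν (n + 1)))) := by
  cases N with
  | zero =>
    simp only [backward, integral_const, probReal_univ, one_smul, norm_one, one_pow,
      Finset.range_zero, Finset.sum_empty, sub_zero, mul_one]
    exact Real.one_le_exp (by positivity)
  | succ k =>
    obtain ⟨b, b', hb0, hbb', hb, -, hprod⟩ := exists_norm_backward_le_mul_le_exp hC h hg hg1 k 0
    have hint : ‖∫ x, backward κ g (k + 1) 0 x ∂(ν 0)‖ ≤ b := by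
      simpa using norm_integral_le_of_norm_le_const hb
    have hlast := circVariance_le_one (g (k + 1)) (ν (k + 1))
    calc ‖∫ x, backward κ g (k + 1) 0 x ∂(ν 0)‖ ^ 2 ≤ b * b' := by
          rw [sq]; exact mul_le_mul hint (hint.trans hbb') (norm_nonneg _) hb0
      _ ≤ _ := hprod
      _ ≤ _ := by
        rw [Real.exp_le_exp, ← mul_neg, Finset.sum_range_succ]
        simp only [zero_add, add_comm 1]
        gcongr
        linarith

end Decay

lemma EllipticStep.norm_kernelOp_mul_le {ν ν' : Measure E} {η : Kernel E E} {C S : ℝ}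
    [IsMarkovKernel η] [IsProbabilityMeasure ν'] (hC : 0 ≤ C) (h : EllipticStep ν η ν' C)
    {u v : E → ℂ} (hu : Measurable u) (hi : Integrable u ν') (hS : 0 ≤ S)
    (hvS : ∀ᵐ y ∂ν', ‖v y‖ ≤ S) :
    ∀ᵐ x ∂ν, ‖kernelOp η (fun y => u y * v y) x‖ ≤ C * (∫ y, ‖u y‖ ∂ν') * S := by
  filter_upwards [h.ae_map_le hu, h.ae_ae hvS] with x hx hvx
  have hmap : ∀ ρ : Measure E, ∫ z, ‖z‖ ∂(ρ.map u) = ∫ y, ‖u y‖ ∂ρ := fun ρ =>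
    integral_map hu.aemeasurable (by fun_prop)
  have hi' : Integrable (fun z : ℂ => ‖z‖) (ν'.map u) :=
    (integrable_map_measure (by fun_prop) hu.aemeasurable).2 hi.norm
  have hle := integral_le_mul_integral_of_le_smul hC hx.1 (fun z => norm_nonneg z) hi'
  have hix : Integrable (fun y => ‖u y‖) (η x) :=
    (integrable_map_measure (f := u) (g := norm) (by fun_prop) hu.aemeasurable).1
      ((hi'.smul_measure ENNReal.ofReal_ne_top).mono_measure hx.1)
  rw [hmap, hmap] at hle
  calc ‖kernelOp η (fun y => u y * v y) x‖ ≤ ∫ y, ‖u y‖ * S ∂(η x) := by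
        refine norm_integral_le_of_norm_le (hix.mul_const S) (hvx.mono fun y hy => ?_)
        rw [norm_mul]
        gcongr
    _ ≤ C * (∫ y, ‖u y‖ ∂ν') * S := by rw [integral_mul_const]; gcongr

/-- `Φ` stays within relative distance `1/4` of the nonzero constant `c`: the complex cone in which
perturbed transition operators keep the iterates of the constant function `1`. -/
def NearConstant (ν : Measure E) (Φ : E → ℂ) (c : ℂ) : Prop :=
  c ≠ 0 ∧ ∀ᵐ x ∂ν, ‖Φ x - c‖ ≤ ‖c‖ / 4

/-- `Ψ` is at most `B` times `Φ`, in the sense that `Ψ` is a multiple `d Φ` plus a remainder of size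
`ρ ‖c‖`. The weight `10` makes `‖d‖ + 10 ρ` nonincreasing under a transition operator. -/
def ComparableTo (ν : Measure E) (Φ : E → ℂ) (c : ℂ) (Ψ : E → ℂ) (B : ℝ) : Prop :=
  ∃ (d : ℂ) (ρ : ℝ), 0 ≤ ρ ∧ ‖d‖ + 10 * ρ ≤ B ∧ ∀ᵐ x ∂ν, ‖Ψ x - d * Φ x‖ ≤ ρ * ‖c‖

section Cone

variable {ν ν' : Measure E} {η : Kernel E E} {C : ℝ} {w Φ Ψ : E → ℂ} {c : ℂ}

lemma NearConstant.norm_le (h : NearConstant ν Φ c) : ∀ᵐ x ∂ν, ‖Φ x‖ ≤ 5 / 4 * ‖c‖ := by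
  filter_upwards [h.2] with x hx
  have := norm_le_norm_add_norm_sub' (Φ x) c
  linarith

lemma NearConstant.integral_ne_zero_and_norm_integral_le [IsProbabilityMeasure ν] {B : ℝ}
    (hΦm : Measurable Φ) (hΨm : Measurable Ψ) (hΦ : NearConstant ν Φ c)
    (hΨ : ComparableTo ν Φ c Ψ B) :
    ∫ x, Φ x ∂ν ≠ 0 ∧ ‖∫ x, Ψ x ∂ν‖ ≤ B * ‖∫ x, Φ x ∂ν‖ := by
  obtain ⟨d, ρ, hρ, hB, hd⟩ := hΨ
  have hc : 0 < ‖c‖ := norm_pos_iff.2 hΦ.1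
  have hiΦ : Integrable Φ ν := Integrable.of_bound hΦm.aestronglyMeasurable _ hΦ.norm_le
  have hΦc : ‖∫ x, Φ x ∂ν - c‖ ≤ ‖c‖ / 4 := by
    simpa [integral_sub hiΦ (integrable_const c)] using norm_integral_le_of_norm_le_const hΦ.2
  have hlow : 3 / 4 * ‖c‖ ≤ ‖∫ x, Φ x ∂ν‖ := by
    have := norm_le_norm_add_norm_sub (∫ x, Φ x ∂ν) c
    linarith
  have hiE : Integrable (fun x => Ψ x - d * Φ x) ν :=
    Integrable.of_bound (by fun_prop) _ hd
  have hΨE : ∫ x, Ψ x ∂ν = d * ∫ x, Φ x ∂ν + ∫ x, (Ψ x - d * Φ x) ∂ν := by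
    rw [← integral_const_mul, ← integral_add (hiΦ.const_mul d) hiE]
    simp only [add_sub_cancel]
  refine ⟨norm_pos_iff.1 (by linarith), ?_⟩
  calc ‖∫ x, Ψ x ∂ν‖ ≤ ‖d‖ * ‖∫ x, Φ x ∂ν‖ + ρ * ‖c‖ := by
        rw [hΨE, ← norm_mul]
        refine norm_add_le_of_le le_rfl ?_
        simpa using norm_integral_le_of_norm_le_const hd
    _ ≤ (‖d‖ + 10 * ρ) * ‖∫ x, Φ x ∂ν‖ := by nlinarith
    _ ≤ B * ‖∫ x, Φ x ∂ν‖ := by gcongr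

/- One step of the cone argument on norms: `x = C⁻¹`, `a = ‖d‖`, and `M` is the `L¹` size of the
defect. -/
lemma cone_constant_le {x a ρ M B n n' : ℝ} (hx0 : 0 ≤ x) (hx1 : x ≤ 1) (ha : 0 ≤ a) (hρ : 0 ≤ ρ)
    (hM : 0 ≤ M) (hB : a + 10 * ρ ≤ B) (hn' : 0 < n') (hn : (1 - 3 / 8 * x) * n ≤ n')
    (hn0 : 0 ≤ n) :
    a + x * ((1 + 10⁻¹ * x) * (ρ * n)) / n' + 10 * (((1 - 3 / 4 * x) * ((1 + 10⁻¹ * x) * (ρ * n))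
      + M * (11 / 10 * ((5 / 4 * a + ρ) * n))) / n') ≤ (1 + 22 * M) * B := by
  have hcontract : (1 + 10⁻¹ * x) * (1 - 13 / 20 * x) * (n / n') ≤ 1 := by
    rw [mul_div_assoc', div_le_one hn']
    nlinarith [mul_nonneg hx0 hn0, mul_nonneg (mul_nonneg hx0 hx0) hn0]
  have hdefect : n / n' ≤ 8 / 5 := by
    rw [div_le_iff₀ hn']
    nlinarith
  have hsplit : a + x * ((1 + 10⁻¹ * x) * (ρ * n)) / n' + 10 * (((1 - 3 / 4 * x) *
      ((1 + 10⁻¹ * x) * (ρ * n)) + M * (11 / 10 * ((5 / 4 * a + ρ) * n))) / n')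
      = a + 10 * ρ * ((1 + 10⁻¹ * x) * (1 - 13 / 20 * x) * (n / n'))
        + M * (11 * (5 / 4 * a + ρ)) * (n / n') := by
    field_simp; ring
  rw [hsplit]
  calc _ ≤ a + 10 * ρ * 1 + M * (11 * (5 / 4 * a + ρ)) * (8 / 5) := by gcongr
    _ ≤ (1 + 22 * M) * B := by nlinarith [mul_nonneg hM hρ]

lemma norm_mul_le_of_norm_sub_one_le {z u : ℂ} {ε S : ℝ} (hz : ‖z - 1‖ ≤ ε) (hu : ‖u‖ ≤ S) :
    ‖z * u‖ ≤ (1 + ε) * S := by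
  have hz' : ‖z‖ ≤ 1 + ε := by
    have := norm_le_norm_add_norm_sub' z 1
    rw [norm_one] at this
    linarith
  rw [norm_mul]
  exact mul_le_mul hz' hu (norm_nonneg _) ((norm_nonneg _).trans hz')

lemma kernelOp_mul_mul_eq {g : E → ℂ} {g₀ d : ℂ} {x : E}
    (hE : Integrable (fun y => w y * (Ψ y - d * Φ y)) (η x))
    (hΦ : Integrable (fun y => w y * Φ y) (η x))
    (hg : Integrable (fun y => (g y - g₀) * (w y * Ψ y)) (η x)) :
    kernelOp η (fun y => g y * (w y * Ψ y)) x
      = g₀ * (kernelOp η (fun y => w y * (Ψ y - d * Φ y)) x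
          + d * kernelOp η (fun y => w y * Φ y) x)
        + kernelOp η (fun y => (g y - g₀) * (w y * Ψ y)) x := by
  have hsum : Integrable (fun y => w y * (Ψ y - d * Φ y) + d * (w y * Φ y)) (η x) :=
    hE.add (hΦ.const_mul d)
  rw [← kernelOp_const_mul, ← kernelOp_add hE (hΦ.const_mul d), ← kernelOp_const_mul,
    ← kernelOp_add (hsum.const_mul g₀) hg]
  exact congrArg (kernelOp η · x) (funext fun y => by ring)

/- Replacing `T` by its approximation `e`, and `e` by the multiple `(e / c) φ` of `φ`. -/
lemma norm_mul_add_add_sub_mul_le {g₀ T d φ D e c : ℂ} {x R m : ℝ} (hg₀ : ‖g₀‖ = 1) (hc : c ≠ 0)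
    (hT : ‖T - e‖ ≤ (1 - x) * R) (he : ‖e‖ ≤ x * R) (hφ : ‖φ - c‖ ≤ ‖c‖ / 4) (hD : ‖D‖ ≤ m) :
    ‖g₀ * (T + d * φ) + D - g₀ * (d + e / c) * φ‖ ≤ (1 - 3 / 4 * x) * R + m := by
  have hsplit : g₀ * (T + d * φ) + D - g₀ * (d + e / c) * φ
      = g₀ * (T - e) + g₀ * (e / c * (c - φ)) + D := by
    field_simp
    ring
  have hcorr : ‖e / c * (c - φ)‖ ≤ x * R / 4 := by
    have : 0 < ‖c‖ := norm_pos_iff.2 hc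
    calc ‖e / c * (c - φ)‖ ≤ ‖e‖ / ‖c‖ * (‖c‖ / 4) := by
          rw [norm_mul, norm_div, norm_sub_rev]
          gcongr
      _ = ‖e‖ / 4 := by field_simp
      _ ≤ x * R / 4 := by gcongr
  calc _ ≤ ‖T - e‖ + ‖e / c * (c - φ)‖ + ‖D‖ := by
        rw [hsplit]
        refine (norm_add₃_le ..).trans_eq ?_
        rw [norm_mul, norm_mul g₀, hg₀, one_mul, one_mul]
    _ ≤ (1 - x) * R + x * R / 4 + m := by gcongr
    _ = _ := by ring

variable [IsMarkovKernel η] [IsProbabilityMeasure ν']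

lemma NearConstant.exists_kernelOp (hC : 1 ≤ C) (h : EllipticStep ν η ν' C) (hw : Measurable w)
    (hw1 : ∀ y, ‖w y - 1‖ ≤ 10⁻¹ * C⁻¹) (hΦm : Measurable Φ) (hΦ : NearConstant ν' Φ c) :
    ∃ c', (1 - 3 / 8 * C⁻¹) * ‖c‖ ≤ ‖c'‖ ∧ NearConstant ν (kernelOp η fun y => w y * Φ y) c' := by
  have hx0 : 0 < C⁻¹ := by positivity
  have hx1 : C⁻¹ ≤ 1 := inv_le_one_of_one_le₀ hC
  have hc : 0 < ‖c‖ := norm_pos_iff.2 hΦ.1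
  have hR : ∀ᵐ y ∂ν', ‖w y * Φ y - c‖ ≤ (1 / 4 + 8⁻¹ * C⁻¹) * ‖c‖ := by
    filter_upwards [hΦ.2, hΦ.norm_le] with y hy hy'
    calc ‖w y * Φ y - c‖ = ‖(w y - 1) * Φ y + (Φ y - c)‖ := by ring_nf
      _ ≤ 10⁻¹ * C⁻¹ * (5 / 4 * ‖c‖) + ‖c‖ / 4 := by
        refine norm_add_le_of_le ((norm_mul_le _ _).trans ?_) hy
        gcongr
        exact hw1 y
      _ = _ := by ring
  obtain ⟨c', hc'c, hc'⟩ := h.exists_norm_kernelOp_sub_le (by positivity) (hw.mul hΦm) hR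
  have hlow : (1 - 3 / 8 * C⁻¹) * ‖c‖ ≤ ‖c'‖ := by
    have := norm_le_norm_add_norm_sub c' c
    nlinarith [mul_nonneg (mul_nonneg hx0.le (sub_nonneg.2 hx1)) hc.le]
  refine ⟨c', hlow, norm_pos_iff.1 (lt_of_lt_of_le (by nlinarith) hlow), hc'.mono fun x hx => ?_⟩
  refine hx.trans ?_
  nlinarith [mul_nonneg hx0.le hc.le, mul_nonneg (mul_nonneg hx0.le hx0.le) hc.le]

lemma NearConstant.exists_norm_kernelOp_sub_mul_le (hC : 1 ≤ C) (h : EllipticStep ν η ν' C)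
    (hw : Measurable w) (hw1 : ∀ y, ‖w y - 1‖ ≤ 10⁻¹ * C⁻¹) (hΦm : Measurable Φ)
    (hΨm : Measurable Ψ) {g : E → ℂ} (hg : Measurable g) (hg1 : ∀ y, ‖g y‖ = 1) {g₀ : ℂ}
    (hg₀ : ‖g₀‖ = 1) (hΦ : NearConstant ν' Φ c) {c' d : ℂ} {ρ : ℝ} (hρ : 0 ≤ ρ)
    (hΦ' : NearConstant ν (kernelOp η fun y => w y * Φ y) c')
    (hΨ : ∀ᵐ y ∂ν', ‖Ψ y - d * Φ y‖ ≤ ρ * ‖c‖) :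
    ∃ e : ℂ, ‖e‖ ≤ C⁻¹ * ((1 + 10⁻¹ * C⁻¹) * (ρ * ‖c‖)) ∧ ∀ᵐ x ∂ν,
      ‖kernelOp η (fun y => g y * (w y * Ψ y)) x
          - g₀ * (d + e / c') * kernelOp η (fun y => w y * Φ y) x‖
        ≤ (1 - 3 / 4 * C⁻¹) * ((1 + 10⁻¹ * C⁻¹) * (ρ * ‖c‖))
          + C * (∫ y, ‖g y - g₀‖ ∂ν') * (11 / 10 * ((5 / 4 * ‖d‖ + ρ) * ‖c‖)) := by
  have hC0 : 0 < C := by positivity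
  have hw1' : ∀ y, ‖w y - 1‖ ≤ 10⁻¹ := fun y =>
    (hw1 y).trans (mul_le_of_le_one_right (by norm_num) (inv_le_one_of_one_le₀ hC))
  have hwE : ∀ᵐ y ∂ν', ‖w y * (Ψ y - d * Φ y)‖ ≤ (1 + 10⁻¹ * C⁻¹) * (ρ * ‖c‖) :=
    hΨ.mono fun y hy => norm_mul_le_of_norm_sub_one_le (hw1 y) hy
  have hwΦ : ∀ᵐ y ∂ν', ‖w y * Φ y‖ ≤ (1 + 10⁻¹) * (5 / 4 * ‖c‖) :=
    hΦ.norm_le.mono fun y hy => norm_mul_le_of_norm_sub_one_le (hw1' y) hy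
  have hwΨ : ∀ᵐ y ∂ν', ‖w y * Ψ y‖ ≤ 11 / 10 * ((5 / 4 * ‖d‖ + ρ) * ‖c‖) := by
    filter_upwards [hΨ, hΦ.norm_le] with y hy hy'
    have hΨy : ‖Ψ y‖ ≤ (5 / 4 * ‖d‖ + ρ) * ‖c‖ :=
      calc ‖Ψ y‖ = ‖(Ψ y - d * Φ y) + d * Φ y‖ := by rw [sub_add_cancel]
        _ ≤ ρ * ‖c‖ + ‖d‖ * (5 / 4 * ‖c‖) :=
          norm_add_le_of_le hy ((norm_mul_le _ _).trans (by gcongr))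
        _ = _ := by ring
    exact (norm_mul_le_of_norm_sub_one_le (hw1' y) hΨy).trans_eq (by norm_num)
  have hig : Integrable (fun y => g y - g₀) ν' :=
    (integrable_of_norm_eq_one hg hg1).sub (integrable_const g₀)
  obtain ⟨e, he, heE⟩ := h.exists_norm_kernelOp_sub_le hC0 (v := fun y => w y * (Ψ y - d * Φ y))
    (by fun_prop) (c := 0) (by simpa using hwE)
  refine ⟨e, by simpa using he, ?_⟩
  filter_upwards [heE, hΦ'.2, h.ae_ae hwE, h.ae_ae hwΦ, h.ae_ae hwΨ,
    h.norm_kernelOp_mul_le hC0.le (hg.sub_const g₀) hig (by positivity) hwΨ]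
    with x hT hφ hE hΦx hΨx hD
  have hgx : ∀ᵐ y ∂(η x), ‖(g y - g₀) * (w y * Ψ y)‖
      ≤ (1 + 1) * (11 / 10 * ((5 / 4 * ‖d‖ + ρ) * ‖c‖)) := by
    filter_upwards [hΨx] with y hy
    rw [norm_mul]
    gcongr
    exact norm_sub_le_of_le (hg1 y).le hg₀.le
  rw [kernelOp_mul_mul_eq (Integrable.of_bound (by fun_prop) _ hE)
    (Integrable.of_bound (by fun_prop) _ hΦx) (Integrable.of_bound (by fun_prop) _ hgx)]
  exact norm_mul_add_add_sub_mul_le hg₀ hΦ'.1 hT (by simpa using he) hφ hD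

lemma ComparableTo.exists_nearConstant_comparableTo_kernelOp (hC : 1 ≤ C)
    (h : EllipticStep ν η ν' C)
    (hw : Measurable w) (hw1 : ∀ y, ‖w y - 1‖ ≤ 10⁻¹ * C⁻¹) (hΦm : Measurable Φ)
    (hΨm : Measurable Ψ) {g : E → ℂ} (hg : Measurable g) (hg1 : ∀ y, ‖g y‖ = 1) {g₀ : ℂ}
    (hg₀ : ‖g₀‖ = 1) {B : ℝ} (hΦ : NearConstant ν' Φ c) (hΨ : ComparableTo ν' Φ c Ψ B) :
    ∃ c', NearConstant ν (kernelOp η fun y => w y * Φ y) c' ∧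
      ComparableTo ν (kernelOp η fun y => w y * Φ y) c' (kernelOp η fun y => g y * (w y * Ψ y))
        ((1 + 22 * (C * ∫ y, ‖g y - g₀‖ ∂ν')) * B) := by
  obtain ⟨c', hcc', hΦ'⟩ := hΦ.exists_kernelOp hC h hw hw1 hΦm
  obtain ⟨d, ρ, hρ, hB, hd⟩ := hΨ
  obtain ⟨e, he, hΨ'⟩ :=
    hΦ.exists_norm_kernelOp_sub_mul_le hC h hw hw1 hΦm hΨm hg hg1 hg₀ hρ hΦ' hd
  have hc' : 0 < ‖c'‖ := norm_pos_iff.2 hΦ'.1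
  have hC0 : 0 < C := by positivity
  have hx1 : C⁻¹ ≤ 1 := inv_le_one_of_one_le₀ hC
  have hx2 : 0 ≤ 1 - 3 / 4 * C⁻¹ := by linarith
  refine ⟨c', hΦ', g₀ * (d + e / c'), ((1 - 3 / 4 * C⁻¹) * ((1 + 10⁻¹ * C⁻¹) * (ρ * ‖c‖))
    + C * (∫ y, ‖g y - g₀‖ ∂ν') * (11 / 10 * ((5 / 4 * ‖d‖ + ρ) * ‖c‖))) / ‖c'‖,
    by positivity, ?_, ?_⟩
  · refine le_trans ?_ (cone_constant_le (inv_nonneg.2 hC0.le) hx1 (norm_nonneg d) hρ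
      (by positivity) hB hc' hcc' (norm_nonneg c))
    rw [norm_mul, hg₀, one_mul]
    gcongr
    exact norm_add_le_of_le le_rfl (by rw [norm_div]; gcongr)
  · simpa only [div_mul_cancel₀ _ hc'.ne'] using hΨ'

end Cone

section ConeIteration

variable {ν : ℕ → Measure E} {κ : ℕ → Kernel E E} {C : ℝ} [∀ n, IsMarkovKernel (κ n)]
  [∀ n, IsProbabilityMeasure (ν n)] {g w : ℕ → E → ℂ} {g₀ : ℕ → ℂ}

lemma exists_nearConstant_comparableTo_backward (hC : 1 ≤ C)
    (h : ∀ n, EllipticStep (ν n) (κ n) (ν (n + 1)) C)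
    (hw : ∀ n, Measurable (w n)) (hw1 : ∀ n y, ‖w n y - 1‖ ≤ 10⁻¹ * C⁻¹)
    (hg : ∀ n, Measurable (g n)) (hg1 : ∀ n y, ‖g n y‖ = 1) (hg₀ : ∀ n, ‖g₀ n‖ = 1) (k n : ℕ) :
    ∃ c, NearConstant (ν n) (backward κ w k n) c ∧
      ComparableTo (ν n) (backward κ w k n) c (backward κ (g * w) k n)
        (Real.exp (22 * C * ∑ j ∈ Finset.range k,
          ∫ y, ‖g (n + 1 + j) y - g₀ (n + 1 + j)‖ ∂(ν (n + 1 + j)))) := by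
  induction k generalizing n with
  | zero =>
    exact ⟨1, ⟨one_ne_zero, ae_of_all _ fun x => by simp [backward]⟩, 1, 0, le_rfl, by simp,
      ae_of_all _ fun x => by simp [backward]⟩
  | succ k ih =>
    obtain ⟨c, hΦ, hΨ⟩ := ih (n + 1)
    obtain ⟨c', hΦ', d, ρ, hρ, hB, hd⟩ := hΨ.exists_nearConstant_comparableTo_kernelOp hC (h n)
      (hw _) (hw1 _) (measurable_backward κ hw k _)
      (measurable_backward κ (g := g * w) (fun n => (hg n).mul (hw n)) k _) (hg _) (hg1 _)
      (hg₀ (n + 1)) hΦ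
    refine ⟨c', hΦ', d, ρ, hρ, hB.trans ?_,
      by simpa only [backward, Pi.mul_apply, mul_assoc] using hd⟩
    rw [Finset.sum_range_succ', mul_add, Real.exp_add, mul_comm (Real.exp _), add_zero]
    simp only [← add_assoc, add_right_comm _ _ 1]
    gcongr
    refine le_of_eq_of_le ?_ (Real.add_one_le_exp _)
    ring

lemma integral_backward_ne_zero_and_norm_le (hC : 1 ≤ C)
    (h : ∀ n, EllipticStep (ν n) (κ n) (ν (n + 1)) C)
    (hw : ∀ n, Measurable (w n)) (hw1 : ∀ n y, ‖w n y - 1‖ ≤ 10⁻¹ * C⁻¹)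
    (hg : ∀ n, Measurable (g n)) (hg1 : ∀ n y, ‖g n y‖ = 1) (hg₀ : ∀ n, ‖g₀ n‖ = 1) (N : ℕ) :
    ∫ x, backward κ w N 0 x ∂(ν 0) ≠ 0 ∧
      ‖∫ x, backward κ (g * w) N 0 x ∂(ν 0)‖
        ≤ Real.exp (22 * C * ∑ n ∈ Finset.range N, ∫ y, ‖g (n + 1) y - g₀ (n + 1)‖ ∂(ν (n + 1)))
          * ‖∫ x, backward κ w N 0 x ∂(ν 0)‖ := by
  obtain ⟨c, hΦ, hΨ⟩ := exists_nearConstant_comparableTo_backward hC h hw hw1 hg hg1 hg₀ N 0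
  simpa only [zero_add, add_comm 1] using hΦ.integral_ne_zero_and_norm_integral_le
    (measurable_backward κ hw N 0)
    (measurable_backward κ (g := g * w) (fun n => (hg n).mul (hw n)) N 0) hΨ

end ConeIteration

lemma exists_forall_mul_dist_le_dist_sq {α : Type*} [MetricSpace α] {A : Set α}
    (hA : A.Finite) :
    ∃ s > 0, ∀ a ∈ A, ∀ b ∈ A, s * dist a b ≤ dist a b ^ 2 := by
  by_cases hA' : A.Nontrivial
  · refine ⟨A.infsep, (hA.infsep_pos_iff_nontrivial).2 hA', fun a ha b hb => ?_⟩
    rcases eq_or_ne a b with rfl | hab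
    · simp
    rw [sq]
    gcongr
    exact Set.infsep_le_dist_of_mem ha hb hab
  · refine ⟨1, one_pos, fun a ha b hb => ?_⟩
    simp [Set.not_nontrivial_iff.1 hA' ha hb]

lemma exists_integral_norm_sub_le {A : Set ℂ} (hA : A.Finite) :
    ∃ L, 0 ≤ L ∧ ∀ (ρ : Measure E) [IsProbabilityMeasure ρ] (g : E → ℂ), Measurable g →
      (∀ y, ‖g y‖ = 1) → (∀ y, g y ∈ A) →
        ∃ y₀, ∫ y, ‖g y - g y₀‖ ∂ρ ≤ L * circVariance g ρ := by
  obtain ⟨s, hs, hA⟩ := exists_forall_mul_dist_le_dist_sq hA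
  refine ⟨2 / s, by positivity, fun ρ _ g hg hg1 hgA => ?_⟩
  obtain ⟨y₀, hy₀⟩ := exists_integral_norm_sub_sq_le (ρ := ρ) hg hg1
  refine ⟨y₀, ?_⟩
  rw [div_mul_eq_mul_div, le_div_iff₀' hs, ← integral_const_mul]
  refine (integral_mono ?_ (integrable_norm_sub_sq hg hg1 _) fun y => ?_).trans hy₀
  · exact (((integrable_of_norm_eq_one hg hg1).sub (integrable_const _)).norm.const_mul s)
  · simpa only [dist_eq_norm] using hA _ (hgA y) _ (hgA y₀)

/-- The σ-algebra of the past of the process up to time `n`. -/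
abbrev pastSigma (X : ℕ → Ω → E) (n : ℕ) : MeasurableSpace Ω :=
  ⨆ i : Fin (n + 1), MeasurableSpace.comap (X i) (inferInstance : MeasurableSpace E)

omit [MeasurableSpace Ω] in
lemma measurable_pastSigma (X : ℕ → Ω → E) {j n : ℕ} (hj : j ≤ n) :
    Measurable[pastSigma X n] (X j) :=
  measurable_iff_comap_le.2 <| le_iSup (fun i : Fin (n + 1) => MeasurableSpace.comap (X i)
    (inferInstance : MeasurableSpace E)) ⟨j, by omega⟩

lemma pastSigma_le {X : ℕ → Ω → E} (hX : ∀ n, Measurable (X n)) (n : ℕ) :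
    pastSigma X n ≤ (inferInstance : MeasurableSpace Ω) :=
  iSup_le fun i => (hX i).comap_le

lemma integral_comp_kernelOp (ρ : Measure E) [IsFiniteMeasure ρ] (η : Kernel E E)
    [IsMarkovKernel η] {u : E → ℂ} (hu : Measurable u) {R : ℝ} (hR : ∀ x, ‖u x‖ ≤ R) :
    ∫ y, u y ∂(η ∘ₘ ρ) = ∫ x, kernelOp η u x ∂ρ := by
  have hi : Integrable u (η ∘ₘ ρ) := Integrable.of_bound hu.aestronglyMeasurable R (ae_of_all _ hR)
  rw [Measure.comp_eq_comp_const_apply] at hi ⊢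
  rw [Kernel.integral_comp hi]
  simp [kernelOp]

section MarkovProperty

variable {μ : Measure Ω} {X : ℕ → Ω → E} {κ : ℕ → Kernel E E} {C : ℝ}

lemma UEChain.ellipticStep (h : UEChain μ X κ C) (n : ℕ) :
    EllipticStep (μ.map (X n)) (κ n) (μ.map (X (n + 1))) C := by
  intro A hA
  have hm := (κ n).measurable_coe hA
  exact (ae_map_iff (h.2.1 n).aemeasurable ((measurableSet_le hm measurable_const).inter
    (measurableSet_le measurable_const (hm.const_mul _)))).2 (h.2.2.2.2 n A hA)

lemma UEChain.one_le (h : UEChain μ X κ C) : 1 ≤ C := by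
  have := h.1
  have := h.2.2.1 0
  obtain ⟨ω, hω, -⟩ := (h.2.2.2.2 0 Set.univ MeasurableSet.univ).exists
  simpa [Measure.map_apply (h.2.1 1) MeasurableSet.univ, ENNReal.one_le_ofReal] using hω

lemma UEChain.map_restrict (h : UEChain μ X κ C) (n : ℕ) {G : Set Ω}
    (hG : MeasurableSet[pastSigma X n] G) :
    (μ.restrict G).map (X (n + 1)) = κ n ∘ₘ ((μ.restrict G).map (X n)) := by
  obtain ⟨hμ, hX, hκ, hM, -⟩ := h
  have := hκ n
  have hle := pastSigma_le hX n
  ext A hA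
  have hκA := ((κ n).measurable_coe hA).comp (hX n)
  rw [Measure.map_apply (hX _) hA, Measure.bind_apply hA (κ n).measurable.aemeasurable,
    lintegral_map ((κ n).measurable_coe hA) (hX n)]
  have hfin : ∫⁻ ω in G, κ n (X n ω) A ∂μ ≠ ∞ :=
    ((lintegral_mono fun _ => prob_le_one).trans_lt (by simp)).ne
  refine (ENNReal.toReal_eq_toReal_iff' (measure_ne_top _ _) hfin).1 ?_
  have hi : Integrable (fun ω => A.indicator (fun _ => (1 : ℝ)) (X (n + 1) ω)) μ :=
    (integrable_const (1 : ℝ)).indicator (hX (n + 1) hA)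
  calc (μ.restrict G (X (n + 1) ⁻¹' A)).toReal
      = ∫ ω in G, A.indicator (fun _ => (1 : ℝ)) (X (n + 1) ω) ∂μ := by
        rw [← measureReal_def, ← integral_indicator_one (hX (n + 1) hA)]; rfl
    _ = ∫ ω in G, (κ n (X n ω) A).toReal ∂μ := by
        rw [← setIntegral_condExp hle hi hG]
        exact setIntegral_congr_ae (hle _ hG) ((hM n A hA).mono fun ω hω _ => hω)
    _ = (∫⁻ ω in G, κ n (X n ω) A ∂μ).toReal :=
        integral_toReal hκA.aemeasurable (ae_of_all _ fun ω => measure_lt_top _ _)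

lemma UEChain.condExp (h : UEChain μ X κ C) (n : ℕ) {u : E → ℂ} (hu : Measurable u) {R : ℝ}
    (hR : ∀ x, ‖u x‖ ≤ R) :
    (fun ω => kernelOp (κ n) u (X n ω)) =ᵐ[μ] μ[fun ω => u (X (n + 1) ω) | pastSigma X n] := by
  have := h.1
  have hX := h.2.1
  have := h.2.2.1 n
  have hTu := measurable_kernelOp (κ n) hu
  refine ae_eq_condExp_of_forall_setIntegral_eq (pastSigma_le hX n)
    (Integrable.of_bound (hu.comp (hX _)).aestronglyMeasurable R (ae_of_all _ fun ω => hR _))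
    (fun _ _ _ => (Integrable.of_bound (hTu.comp (hX _)).aestronglyMeasurable R
      (ae_of_all _ fun ω => norm_kernelOp_le_of_ae (ae_of_all _ hR))).integrableOn)
    (fun G hG _ => ?_)
    (hTu.comp (measurable_pastSigma X le_rfl)).stronglyMeasurable.aestronglyMeasurable
  rw [← integral_map (hX n).aemeasurable hTu.aestronglyMeasurable,
    ← integral_map (hX (n + 1)).aemeasurable hu.aestronglyMeasurable, h.map_restrict n hG,
    integral_comp_kernelOp _ _ hu hR]

lemma UEChain.integral_mul (h : UEChain μ X κ C) (n : ℕ) {u : E → ℂ} (hu : Measurable u) {R : ℝ}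
    (hR : ∀ x, ‖u x‖ ≤ R) {F : Ω → ℂ} (hF : Measurable[pastSigma X n] F) {R' : ℝ}
    (hFR : ∀ ω, ‖F ω‖ ≤ R') :
    ∫ ω, F ω * u (X (n + 1) ω) ∂μ = ∫ ω, F ω * kernelOp (κ n) u (X n ω) ∂μ := by
  have := h.1
  have hle := pastSigma_le h.2.1 n
  have hp := condExp_stronglyMeasurable_bilin_of_bound (ContinuousLinearMap.mul ℝ ℂ) hle
    hF.stronglyMeasurable (Integrable.of_bound (hu.comp (h.2.1 (n + 1))).aestronglyMeasurable R
      (ae_of_all μ fun ω => hR _)) R' (ae_of_all _ hFR)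
  simp only [ContinuousLinearMap.mul_apply', Function.comp_apply] at hp
  rw [← integral_condExp hle, integral_congr_ae hp]
  exact integral_congr_ae ((h.condExp n hu hR).mono fun ω hω => congrArg (F ω * ·) hω.symm)

lemma UEChain.integral_prod_mul_backward (h : UEChain μ X κ C) {g : ℕ → E → ℂ}
    (hg : ∀ n, Measurable (g n)) {R : ℝ} (hR : ∀ n x, ‖g n x‖ ≤ R) (k n : ℕ) :
    ∫ ω, (∏ j ∈ Finset.Icc 1 (n + k), g j (X j ω)) ∂μ
      = ∫ ω, (∏ j ∈ Finset.Icc 1 n, g j (X j ω)) * backward κ g k n (X n ω) ∂μ := by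
  have := h.2.2.1
  induction k generalizing n with
  | zero => simp [backward]
  | succ k ih =>
    have hF : Measurable[pastSigma X n] (fun ω => ∏ j ∈ Finset.Icc 1 n, g j (X j ω)) :=
      Finset.measurable_fun_prod _ fun j hj => (hg j).comp
        (measurable_pastSigma X (Finset.mem_Icc.1 hj).2)
    have hFR : ∀ ω, ‖∏ j ∈ Finset.Icc 1 n, g j (X j ω)‖ ≤ ∏ _j ∈ Finset.Icc 1 n, R := fun ω =>
      (norm_prod _ _).trans_le
        (Finset.prod_le_prod (fun _ _ => norm_nonneg _) fun j _ => hR j _)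
    have huR : ∀ x, ‖g (n + 1) x * backward κ g k (n + 1) x‖ ≤ R * R ^ k := fun x => by
      rw [norm_mul]
      exact mul_le_mul (hR _ _) (norm_backward_le_pow κ hR _ _ _) (norm_nonneg _)
        ((norm_nonneg _).trans (hR 0 x))
    rw [← add_assoc, add_right_comm, ih (n + 1)]
    refine Eq.trans ?_
      (h.integral_mul n ((hg (n + 1)).mul (measurable_backward κ hg k (n + 1))) huR hF hFR)
    simp only [Finset.prod_Icc_succ_top n.succ_pos, mul_assoc]
    rfl

lemma UEChain.integral_prod_eq_integral_backward (h : UEChain μ X κ C) {g : ℕ → E → ℂ}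
    (hg : ∀ n, Measurable (g n)) {R : ℝ} (hR : ∀ n x, ‖g n x‖ ≤ R) (N : ℕ) :
    ∫ ω, (∏ j ∈ Finset.Icc 1 N, g j (X j ω)) ∂μ
      = ∫ x, backward κ g N 0 x ∂(μ.map (X 0)) := by
  have := h.integral_prod_mul_backward hg hR N 0
  simp only [zero_add] at this
  rw [this, integral_map (h.2.1 0).aemeasurable (measurable_backward κ hg N 0).aestronglyMeasurable]
  simp

end MarkovProperty

/-- The characteristic function `𝔼[e^{izY}]` of an integer-valued variable at complex arguments,
that is, its `complexMGF` at `iz`. Complex `z` are needed to use Cauchy estimates. -/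
def complexCharFun (μ : Measure Ω) (Y : Ω → ℤ) (z : ℂ) : ℂ :=
  ∫ ω, Complex.exp (Complex.I * z * (Y ω : ℂ)) ∂μ

lemma norm_exp_I_mul_int (t : ℝ) (k : ℤ) : ‖Complex.exp (Complex.I * t * k)‖ = 1 := by
  rw [mul_assoc, mul_comm]
  exact_mod_cast Complex.norm_exp_ofReal_mul_I (t * k)

lemma norm_I_mul_mul_int_le (z : ℂ) {k : ℤ} {K : ℕ} (hk : |k| ≤ K) :
    ‖Complex.I * z * k‖ ≤ ‖z‖ * K := by
  rw [norm_mul, norm_mul, Complex.norm_I, one_mul, Complex.norm_intCast]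
  gcongr
  exact_mod_cast hk

section CharFnBounds

variable {μ : Measure Ω} {X : ℕ → Ω → E} {κ : ℕ → Kernel E E} {f : ℕ → E → ℤ} {C : ℝ} {K : ℕ}

lemma measurable_exp_I_mul_int (hf : ∀ n, Measurable (f n)) (z : ℂ) (n : ℕ) :
    Measurable fun y => Complex.exp (Complex.I * z * f n y) :=
  (measurable_from_top (f := fun k : ℤ => Complex.exp (Complex.I * z * k))).comp (hf n)

lemma UEChain.complexCharFun_S_eq_integral_backward (h : UEChain μ X κ C)
    (hf : ∀ n, Measurable (f n)) (hb : ∀ n x, |f n x| ≤ K) (N : ℕ) (z : ℂ) :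
    complexCharFun μ (S X f N) z =
      ∫ x, backward κ (fun n y => Complex.exp (Complex.I * z * f n y)) N 0 x ∂(μ.map (X 0)) := by
  rw [← h.integral_prod_eq_integral_backward (measurable_exp_I_mul_int hf z)
    (R := Real.exp (‖z‖ * K)) (fun n y => (Complex.norm_exp_le_exp_norm _).trans
      (Real.exp_le_exp.2 (norm_I_mul_mul_int_le z (hb n y))))]
  simp only [complexCharFun, S, ← Complex.exp_sum, ← Finset.mul_sum, Int.cast_sum]

lemma norm_exp_I_mul_int_sub_one_le {a : ℝ} (ha : 0 ≤ a) (ha1 : a ≤ 1) {z : ℂ}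
    (hz : ‖z‖ < a / (2 * (K + 1))) {k : ℤ} (hk : |k| ≤ K) :
    ‖Complex.exp (Complex.I * z * k) - 1‖ ≤ a := by
  have hn : ‖Complex.I * z * k‖ ≤ a / 2 :=
    calc ‖Complex.I * z * k‖ ≤ a / (2 * (K + 1)) * (K + 1) :=
          (norm_I_mul_mul_int_le z hk).trans (by gcongr; linarith)
      _ = a / 2 := by field_simp
  have := Complex.norm_exp_sub_one_le (hn.trans (by linarith))
  linarith

lemma UEChain.norm_complexCharFun_S_le (h : UEChain μ X κ C) (hf : ∀ n, Measurable (f n))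
    (hb : ∀ n x, |f n x| ≤ K) (t : ℝ) (N : ℕ) :
    ‖complexCharFun μ (S X f N) t‖ ≤ Real.exp ((4 * C ^ 2)⁻¹ * (1 - ∑ n ∈ Finset.range N,
      circVariance (fun y => Complex.exp (Complex.I * t * f (n + 1) y)) (μ.map (X (n + 1))))) := by
  have := h.1
  have := h.2.2.1
  have : ∀ n, IsProbabilityMeasure (μ.map (X n)) := fun n =>
    Measure.isProbabilityMeasure_map (h.2.1 n).aemeasurable
  have hsq := norm_integral_backward_sq_le_exp h.one_le h.ellipticStep
    (measurable_exp_I_mul_int hf t) (fun n y => norm_exp_I_mul_int t (f n y)) N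
  rw [← h.complexCharFun_S_eq_integral_backward hf hb] at hsq
  refine (pow_le_pow_iff_left₀ (norm_nonneg _) (Real.exp_pos _).le two_ne_zero).1
    (hsq.trans_eq ?_)
  rw [← Real.exp_nat_mul]
  congr 1
  field_simp
  ring

lemma UEChain.complexCharFun_S_ne_zero_and_norm_add_le (h : UEChain μ X κ C)
    (hf : ∀ n, Measurable (f n)) (hb : ∀ n x, |f n x| ≤ K) (t : ℝ) {g₀ : ℕ → ℂ}
    (hg₀ : ∀ n, ‖g₀ n‖ = 1) {z : ℂ} (hz : ‖z‖ < 10⁻¹ * C⁻¹ / (2 * (K + 1))) (N : ℕ) :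
    complexCharFun μ (S X f N) z ≠ 0 ∧
      ‖complexCharFun μ (S X f N) (t + z)‖ ≤ Real.exp (22 * C * ∑ n ∈ Finset.range N,
        ∫ y, ‖Complex.exp (Complex.I * t * f (n + 1) y) - g₀ (n + 1)‖ ∂(μ.map (X (n + 1))))
          * ‖complexCharFun μ (S X f N) z‖ := by
  have := h.1
  have := h.2.2.1
  have hC := h.one_le
  have : ∀ n, IsProbabilityMeasure (μ.map (X n)) := fun n =>
    Measure.isProbabilityMeasure_map (h.2.1 n).aemeasurable
  have hC1 : 10⁻¹ * C⁻¹ ≤ 1 := mul_le_one₀ (by norm_num) (by positivity)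
    (inv_le_one_of_one_le₀ hC)
  have hadd : (fun n y => Complex.exp (Complex.I * (t + z) * f n y)) =
      (fun n y => Complex.exp (Complex.I * t * f n y)) *
        fun n y => Complex.exp (Complex.I * z * f n y) := by
    funext n y
    simp only [Pi.mul_apply, ← Complex.exp_add, mul_add, add_mul]
  rw [h.complexCharFun_S_eq_integral_backward hf hb,
    h.complexCharFun_S_eq_integral_backward hf hb, hadd]
  exact integral_backward_ne_zero_and_norm_le hC h.ellipticStep (measurable_exp_I_mul_int hf z)
    (fun n y => norm_exp_I_mul_int_sub_one_le (by positivity) hC1 hz (hb n y))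
    (measurable_exp_I_mul_int hf t) (fun n y => norm_exp_I_mul_int t (f n y)) hg₀ N

lemma UEChain.exists_complexCharFun_S_bounds_of_forall (h : UEChain μ X κ C)
    (hf : ∀ n, Measurable (f n)) (hb : ∀ n x, |f n x| ≤ K) (t : ℝ) :
    ∃ δ c L : ℝ, 0 < δ ∧ 0 < c ∧ 0 ≤ L ∧ ∀ N, ∃ M : ℝ,
      (∀ z : ℂ, ‖z‖ < δ → complexCharFun μ (S X f N) z ≠ 0 ∧
        ‖complexCharFun μ (S X f N) (t + z)‖ ≤ Real.exp (L * M) * ‖complexCharFun μ (S X f N) z‖) ∧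
      ‖complexCharFun μ (S X f N) t‖ ≤ Real.exp (c * (1 - M)) := by
  have := h.1
  have hC := h.one_le
  have : ∀ n, IsProbabilityMeasure (μ.map (X n)) := fun n =>
    Measure.isProbabilityMeasure_map (h.2.1 n).aemeasurable
  have hfin : ((fun k : ℤ => Complex.exp (Complex.I * t * k)) '' {k | |k| ≤ K}).Finite :=
    ((Set.finite_Icc (-(K : ℤ)) K).subset fun k hk => abs_le.1 hk).image _
  obtain ⟨L, hL0, hL⟩ := exists_integral_norm_sub_le (E := E) hfin
  choose y₀ hy₀ using fun n => hL (μ.map (X n)) _ (measurable_exp_I_mul_int hf t n)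
    (fun y => norm_exp_I_mul_int t _) fun y => Set.mem_image_of_mem _ (hb n y)
  refine ⟨10⁻¹ * C⁻¹ / (2 * (K + 1)), (4 * C ^ 2)⁻¹, 22 * C * L, by positivity, by positivity,
    by positivity, fun N => ⟨_, fun z hz => ?_, h.norm_complexCharFun_S_le hf hb t N⟩⟩
  obtain ⟨hne, hle⟩ := h.complexCharFun_S_ne_zero_and_norm_add_le hf hb t
    (fun n => norm_exp_I_mul_int t (f n (y₀ n))) hz N
  refine ⟨hne, hle.trans ?_⟩
  rw [mul_assoc (22 * C), Finset.mul_sum _ _ L]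
  gcongr
  exact hy₀ _

lemma UEChain.exists_complexCharFun_S_bounds (h : UEChain μ X κ C) (hf : ∀ n, Measurable (f n))
    (hb : ∀ n ω, |f n (X n ω)| ≤ K) (t : ℝ) :
    ∃ δ c L : ℝ, 0 < δ ∧ 0 < c ∧ 0 ≤ L ∧ ∀ N, ∃ M : ℝ,
      (∀ z : ℂ, ‖z‖ < δ → complexCharFun μ (S X f N) z ≠ 0 ∧
        ‖complexCharFun μ (S X f N) (t + z)‖ ≤ Real.exp (L * M) * ‖complexCharFun μ (S X f N) z‖) ∧
      ‖complexCharFun μ (S X f N) t‖ ≤ Real.exp (c * (1 - M)) := by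
  set f' : ℕ → E → ℤ := fun n x => max (-K) (min K (f n x))
  have hS : S X f' = S X f := by
    funext N ω
    refine Finset.sum_congr rfl fun n _ => ?_
    have := abs_le.1 (hb n ω)
    simp only [f', min_eq_right this.2, max_eq_right this.1]
  simpa only [hS] using h.exists_complexCharFun_S_bounds_of_forall (f := f')
    (fun n => measurable_const.max (measurable_const.min (hf n)))
    (fun n x => abs_le.2 ⟨le_max_left _ _, max_le (by omega) (min_le_left _ _)⟩) t

end CharFnBounds

section QuadraturePolynomial

open Polynomial

lemma exists_mem_forall_bilin_eq {𝕜 V : Type*} [Field 𝕜] [AddCommGroup V] [Module 𝕜 V]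
    (B : V →ₗ[𝕜] V →ₗ[𝕜] 𝕜) (hB : ∀ v, B v v = 0 → v = 0) (W : Submodule 𝕜 V)
    [FiniteDimensional 𝕜 W] (φ : V →ₗ[𝕜] 𝕜) : ∃ q ∈ W, ∀ p ∈ W, B q p = φ p := by
  set T : W →ₗ[𝕜] Module.Dual 𝕜 W := B.compl₁₂ W.subtype W.subtype
  have hT : Function.Injective T := (injective_iff_map_eq_zero T).2 fun q hq =>
    Subtype.ext (hB q (DFunLike.congr_fun hq q))
  obtain ⟨q, hq⟩ := (LinearMap.injective_iff_surjective_of_finrank_eq_finrank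
    Subspace.dual_finrank_eq.symm).1 hT (φ.comp W.subtype)
  exact ⟨q, q.2, fun p hp => DFunLike.congr_fun hq ⟨p, hp⟩⟩

lemma integral_mul_mul_self_pos {w : ℝ[X]} (hw : ∀ s ∈ Set.Ioo (0 : ℝ) 1, 0 < w.eval s)
    {q : ℝ[X]} (hq : q ≠ 0) : 0 < ∫ s in (0 : ℝ)..1, (w * q * q).eval s := by
  have hw0 : ∀ s ∈ Set.Icc (0 : ℝ) 1, 0 ≤ w.eval s := fun s hs => by
    rw [← closure_Ioo (zero_ne_one' ℝ)] at hs
    exact closure_minimal (fun s hs => (hw s hs).le)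
      (isClosed_Ici.preimage w.continuous) hs
  obtain ⟨s, hs, hqs⟩ :=
    (Set.Ioo_infinite (zero_lt_one' ℝ)).exists_notMem_finset q.roots.toFinset
  refine intervalIntegral.integral_pos zero_lt_one (w * q * q).continuous.continuousOn
    (fun s hs => ?_) ⟨s, Set.Ioo_subset_Icc_self hs, ?_⟩ <;>
    rw [eval_mul, eval_mul, mul_assoc]
  · exact mul_nonneg (hw0 s (Set.Ioc_subset_Icc_self hs)) (mul_self_nonneg _)
  · exact mul_pos (hw s hs) (mul_self_pos.2 fun h => hqs (by simpa [hq] using h))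

lemma exists_polynomial_integral_mul_eq {w : ℝ[X]}
    (hw : ∀ s ∈ Set.Ioo (0 : ℝ) 1, 0 < w.eval s) (D : ℕ) (φ : ℝ[X] →ₗ[ℝ] ℝ) :
    ∃ q : ℝ[X], ∀ p : ℝ[X], p.degree < D →
      ∫ s in (0 : ℝ)..1, (w * q * p).eval s = φ p := by
  have hint (p : ℝ[X]) : IntervalIntegrable (fun s => p.eval s) volume 0 1 :=
    p.continuous.intervalIntegrable _ _
  set I : ℝ[X] →ₗ[ℝ] ℝ :=
    { toFun := fun p => ∫ s in (0 : ℝ)..1, p.eval s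
      map_add' := fun p q => by
        simpa only [eval_add] using intervalIntegral.integral_add (hint p) (hint q)
      map_smul' := fun c p => by
        simpa only [eval_smul, RingHom.id_apply] using intervalIntegral.integral_smul c _ }
  have : FiniteDimensional ℝ (degreeLT ℝ D) := .of_surjective
    (degreeLTEquiv ℝ D).symm.toLinearMap (degreeLTEquiv ℝ D).symm.surjective
  obtain ⟨q, -, hq⟩ := exists_mem_forall_bilin_eq
    ((LinearMap.mul ℝ ℝ[X] ∘ₗ LinearMap.mulLeft ℝ w).compr₂ I)
    (fun q hq => by_contra fun h => (integral_mul_mul_self_pos hw h).ne' hq) (degreeLT ℝ D) φ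
  exact ⟨q, fun p hp => hq p (mem_degreeLT.2 hp)⟩

lemma exists_polynomial_integral_mul_eq_eval_zero {w : ℝ[X]}
    (hw : ∀ s ∈ Set.Ioo (0 : ℝ) 1, 0 < w.eval s) (D : ℕ) :
    ∃ q : ℝ[X], ∀ p : ℂ[X], p.degree < D →
      ∫ s in (0 : ℝ)..1, (((w * q).eval s : ℝ) : ℂ) * p.eval (s : ℂ) = p.eval 0 := by
  obtain ⟨q, hq⟩ := exists_polynomial_integral_mul_eq hw D (leval 0)
  have hmono (k : ℕ) (hk : k < D) :
      ∫ s in (0 : ℝ)..1, (((w * q).eval s : ℝ) : ℂ) * (s : ℂ) ^ k = (0 : ℂ) ^ k := by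
    have := hq (X ^ k) ((degree_X_pow_le k).trans_lt (by exact_mod_cast hk))
    simp only [eval_mul (p := w * q), eval_pow, eval_X, leval_apply] at this
    rw [← Complex.ofReal_zero, ← Complex.ofReal_pow, ← this, ← intervalIntegral.integral_ofReal]
    push_cast
    rfl
  refine ⟨q, fun p hp => ?_⟩
  have hpD : p.natDegree < D ∨ p = 0 := by
    rcases eq_or_ne p 0 with rfl | hp0
    · exact .inr rfl
    · exact .inl ((natDegree_lt_iff_degree_lt hp0).2 hp)
  rcases hpD with hpD | rfl
  · simp only [eval_eq_sum_range' hpD, Finset.mul_sum]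
    rw [intervalIntegral.integral_finsetSum fun k _ => Continuous.intervalIntegrable
      (by fun_prop) _ _]
    refine Finset.sum_congr rfl fun k hk => ?_
    simp only [mul_left_comm _ (p.coeff k)]
    rw [intervalIntegral.integral_const_mul, hmono k (Finset.mem_range.1 hk)]
  · simp

lemma exists_polynomial_norm_sub_eval_le (D : ℕ) {R : ℝ} (hR : 0 < R) {f : ℂ → ℂ} {B : ℝ}
    (hf : DifferentiableOn ℂ f (Metric.ball 0 R)) (hB : ∀ z ∈ Metric.ball (0 : ℂ) R, ‖f z‖ ≤ B) :
    ∃ p : ℂ[X], p.degree < D ∧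
      ∀ z ∈ Metric.ball (0 : ℂ) R, ‖f z - p.eval z‖ ≤ B * (2 * ‖z‖ / R) ^ D := by
  induction D generalizing f B with
  | zero => exact ⟨0, by simp, fun z hz => by simpa using hB z hz⟩
  | succ D ih =>
    have h0 : (0 : ℂ) ∈ Metric.ball (0 : ℂ) R := Metric.mem_ball_self hR
    obtain ⟨p, hp, hle⟩ := ih (f := dslope f 0) (B := 2 * B / R)
      ((Complex.differentiableOn_dslope (Metric.isOpen_ball.mem_nhds h0)).2 hf) fun z hz =>
        Complex.norm_dslope_le_div_of_mapsTo_ball hf (fun y hy => by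
          rw [Metric.mem_closedBall, dist_eq_norm]
          linarith [norm_sub_le (f y) (f 0), hB y hy, hB 0 h0]) hz
    refine ⟨C (f 0) + X * p, ?_, fun z hz => ?_⟩
    · refine (degree_add_le _ _).trans_lt (max_lt (degree_C_le.trans_lt (by positivity)) ?_)
      rw [mul_comm, degree_mul_X, Nat.cast_succ]
      exact WithBot.add_lt_add_right (by simp) hp
    · have hsplit : f z - (C (f 0) + X * p).eval z = z * (dslope f 0 z - p.eval z) := by
        have := sub_smul_dslope f 0 z
        rw [sub_zero, smul_eq_mul] at this
        rw [mul_sub, this]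
        simp only [eval_add, eval_C, eval_mul, eval_X]
        ring
      calc ‖f z - (C (f 0) + X * p).eval z‖ = ‖z‖ * ‖dslope f 0 z - p.eval z‖ := by
            rw [hsplit, norm_mul]
        _ ≤ ‖z‖ * (2 * B / R * (2 * ‖z‖ / R) ^ D) := by gcongr; exact hle z hz
        _ = B * (2 * ‖z‖ / R) ^ (D + 1) := by ring

lemma norm_integral_mul_sub_integral_mul_le {w f g : ℝ → ℂ} {A ε : ℝ}
    (hwf : IntervalIntegrable (fun s => w s * f s) volume 0 1)
    (hwg : IntervalIntegrable (fun s => w s * g s) volume 0 1)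
    (hw : ∀ s ∈ Set.Icc (0 : ℝ) 1, ‖w s‖ ≤ A)
    (hfg : ∀ s ∈ Set.Icc (0 : ℝ) 1, ‖f s - g s‖ ≤ ε) :
    ‖(∫ s in (0 : ℝ)..1, w s * f s) - ∫ s in (0 : ℝ)..1, w s * g s‖ ≤ A * ε := by
  rw [← intervalIntegral.integral_sub hwf hwg]
  refine (intervalIntegral.norm_integral_le_of_norm_le_const fun s hs => ?_).trans_eq
    (by rw [sub_zero, abs_one, mul_one])
  rw [Set.uIoc_of_le zero_le_one] at hs
  have hs' := Set.Ioc_subset_Icc_self hs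
  rw [← mul_sub, norm_mul]
  exact mul_le_mul (hw s hs') (hfg s hs') (norm_nonneg _) ((norm_nonneg _).trans (hw s hs'))

lemma exists_polynomial_norm_le_norm_integral_mul_add {w : ℝ[X]}
    (hw : ∀ s ∈ Set.Ioo (0 : ℝ) 1, 0 < w.eval s) (D : ℕ) :
    ∃ (q : ℝ[X]) (A : ℝ), ∀ (R B : ℝ) (H : ℂ → ℂ), 1 < R →
      DifferentiableOn ℂ H (Metric.ball 0 R) → (∀ z ∈ Metric.ball (0 : ℂ) R, ‖H z‖ ≤ B) →
      ‖H 0‖ ≤ ‖∫ s in (0 : ℝ)..1, (((w * q).eval s : ℝ) : ℂ) * H s‖ + A * (B * R⁻¹ ^ D) := by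
  obtain ⟨q, hq⟩ := exists_polynomial_integral_mul_eq_eval_zero hw D
  obtain ⟨A, hA⟩ := isCompact_Icc.exists_bound_of_continuousOn (s := Set.Icc (0 : ℝ) 1)
    (w * q).continuous.continuousOn
  refine ⟨q, (A + 1) * 2 ^ D, fun R B H hR hH hB => ?_⟩
  have hR0 : 0 < R := one_pos.trans hR
  obtain ⟨p, hp, hpH⟩ := exists_polynomial_norm_sub_eval_le D hR0 hH hB
  have hball : ∀ s ∈ Set.Icc (0 : ℝ) 1, (s : ℂ) ∈ Metric.ball (0 : ℂ) R := fun s hs => by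
    rw [mem_ball_zero_iff, Complex.norm_real, Real.norm_of_nonneg hs.1]
    exact hs.2.trans_lt hR
  have hB0 : 0 ≤ B := (norm_nonneg _).trans (hB 0 (Metric.mem_ball_self hR0))
  have hpH' : ∀ s ∈ Set.Icc (0 : ℝ) 1, ‖H s - p.eval (s : ℂ)‖ ≤ B * (2 / R) ^ D := fun s hs => by
    refine (hpH s (hball s hs)).trans ?_
    rw [Complex.norm_real, Real.norm_of_nonneg hs.1]
    have hs0 := hs.1
    gcongr
    exact mul_le_of_le_one_right zero_le_two hs.2
  have hHc : ContinuousOn (fun s : ℝ => (((w * q).eval s : ℝ) : ℂ) * H s) (Set.uIcc 0 1) := by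
    rw [Set.uIcc_of_le zero_le_one]
    exact (Complex.continuous_ofReal.comp (w * q).continuous).continuousOn.mul
      (hH.continuousOn.comp Complex.continuous_ofReal.continuousOn hball)
  have hrem : ‖(∫ s in (0 : ℝ)..1, (((w * q).eval s : ℝ) : ℂ) * H s) - p.eval 0‖
      ≤ A * (B * (2 / R) ^ D) := by
    rw [← hq p hp]
    exact norm_integral_mul_sub_integral_mul_le hHc.intervalIntegrable
      (Continuous.intervalIntegrable (by fun_prop) _ _)
      (fun s hs => (Complex.norm_real _).trans_le (hA s hs)) hpH'
  have h0 := hpH' 0 (by simp)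
  rw [Complex.ofReal_zero] at h0
  calc ‖H 0‖ ≤ ‖∫ s in (0 : ℝ)..1, (((w * q).eval s : ℝ) : ℂ) * H s‖ +
        (A * (B * (2 / R) ^ D) + B * (2 / R) ^ D) := by
        have h₁ := norm_sub_norm_le (p.eval 0) (∫ s in (0 : ℝ)..1, (((w * q).eval s : ℝ) : ℂ) * H s)
        have h₂ := norm_sub_norm_le (H 0) (p.eval 0)
        rw [norm_sub_rev] at h₁
        linarith
    _ = _ := by rw [div_eq_mul_inv, mul_pow]; ring

end QuadraturePolynomial

section FourierUnit

open Complex Polynomial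

/-- The Fourier integral `∫₀¹ u(s)e^{isy} ds` of a function on the unit interval, in the
normalization of `charFun`. -/
def fourierUnit (u : ℝ → ℂ) (y : ℝ) : ℂ := ∫ s in (0 : ℝ)..1, u s * exp (I * y * s)

lemma norm_exp_I_mul_mul (x y : ℝ) : ‖exp (I * x * y)‖ = 1 := by
  rw [mul_assoc, mul_comm]
  exact_mod_cast norm_exp_ofReal_mul_I (x * y)

lemma norm_fourierUnit_le {u : ℝ → ℂ} {W : ℝ} (hu : ∀ s ∈ Set.Icc (0 : ℝ) 1, ‖u s‖ ≤ W) (y : ℝ) :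
    ‖fourierUnit u y‖ ≤ W := by
  refine (intervalIntegral.norm_integral_le_of_norm_le_const fun s hs => ?_).trans_eq
    (by rw [sub_zero, abs_one, mul_one])
  rw [Set.uIoc_of_le zero_le_one] at hs
  rw [norm_mul, norm_exp_I_mul_mul, mul_one]
  exact hu s (Set.Ioc_subset_Icc_self hs)

lemma I_mul_fourierUnit_eq_neg {u u' : ℝ → ℂ}
    (hu : ∀ s ∈ Set.Icc (0 : ℝ) 1, HasDerivAt u (u' s) s)
    (hu' : ContinuousOn u' (Set.Icc 0 1)) (h0 : u 0 = 0) (h1 : u 1 = 0) (y : ℝ) :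
    I * y * fourierUnit u y = -fourierUnit u' y := by
  have hI : Set.uIcc (0 : ℝ) 1 = Set.Icc 0 1 := Set.uIcc_of_le zero_le_one
  have hE (s : ℝ) : HasDerivAt (fun s : ℝ => exp (I * y * s)) (I * y * exp (I * y * s)) s := by
    simpa [mul_comm] using ((ofRealCLM.hasDerivAt (x := s)).const_mul (I * y)).cexp
  have hparts := intervalIntegral.integral_mul_deriv_eq_deriv_mul (a := 0) (b := 1)
    (fun s hs => hu s (hI ▸ hs)) (fun s _ => hE s)
    (ContinuousOn.intervalIntegrable (hI ▸ hu')) (Continuous.intervalIntegrable (by fun_prop) _ _)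
  rw [h0, h1, zero_mul, zero_mul, sub_zero, zero_sub] at hparts
  simp only [fourierUnit, ← hparts, ← intervalIntegral.integral_const_mul, mul_left_comm (u _)]

lemma one_add_sq_mul_norm_fourierUnit_le {u u' u'' : ℝ → ℂ} {W : ℝ}
    (hu : ∀ s ∈ Set.Icc (0 : ℝ) 1, HasDerivAt u (u' s) s)
    (hu' : ∀ s ∈ Set.Icc (0 : ℝ) 1, HasDerivAt u' (u'' s) s)
    (hu'' : ContinuousOn u'' (Set.Icc 0 1)) (h0 : u 0 = 0) (h1 : u 1 = 0) (h0' : u' 0 = 0)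
    (h1' : u' 1 = 0) (hW : ∀ s ∈ Set.Icc (0 : ℝ) 1, ‖u s‖ ≤ W)
    (hW'' : ∀ s ∈ Set.Icc (0 : ℝ) 1, ‖u'' s‖ ≤ W) (y : ℝ) :
    (1 + y ^ 2) * ‖fourierUnit u y‖ ≤ 2 * W := by
  have hsq : (y : ℂ) ^ 2 * fourierUnit u y = -fourierUnit u'' y := by
    have e₁ := I_mul_fourierUnit_eq_neg hu
      (fun s hs => (hu' s hs).continuousAt.continuousWithinAt) h0 h1 y
    have e₂ := I_mul_fourierUnit_eq_neg hu' hu'' h0' h1' y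
    linear_combination (-I * y) * e₁ + e₂ + (y : ℂ) ^ 2 * fourierUnit u y * I_sq
  have hnorm : y ^ 2 * ‖fourierUnit u y‖ = ‖fourierUnit u'' y‖ := by
    rw [← norm_neg (fourierUnit u'' y), ← hsq, norm_mul, norm_pow, norm_real, Real.norm_eq_abs,
      sq_abs]
  linarith [norm_fourierUnit_le hW y, norm_fourierUnit_le hW'' y]

lemma exists_forall_norm_eval_le (P : ℝ[X]) :
    ∃ A, ∀ s ∈ Set.Icc (0 : ℝ) 1, ‖((P.eval s : ℝ) : ℂ)‖ ≤ A :=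
  isCompact_Icc.exists_bound_of_continuousOn
    (continuous_ofReal.comp P.continuous).continuousOn

lemma one_add_sq_mul_norm_fourierUnit_mul_le {p p' p'' v v' v'' : ℝ → ℂ} {A B : ℝ}
    (hp : ∀ s ∈ Set.Icc (0 : ℝ) 1, HasDerivAt p (p' s) s)
    (hp' : ∀ s ∈ Set.Icc (0 : ℝ) 1, HasDerivAt p' (p'' s) s)
    (hp'' : ContinuousOn p'' (Set.Icc 0 1)) (h0 : p 0 = 0) (h1 : p 1 = 0) (h0' : p' 0 = 0)
    (h1' : p' 1 = 0) (hv : ∀ s ∈ Set.Icc (0 : ℝ) 1, HasDerivAt v (v' s) s)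
    (hv' : ∀ s ∈ Set.Icc (0 : ℝ) 1, HasDerivAt v' (v'' s) s)
    (hv'' : ContinuousOn v'' (Set.Icc 0 1))
    (hA : ∀ s ∈ Set.Icc (0 : ℝ) 1, ‖p s‖ ≤ A ∧ ‖p' s‖ ≤ A ∧ ‖p'' s‖ ≤ A)
    (hB : ∀ s ∈ Set.Icc (0 : ℝ) 1, ‖v s‖ ≤ B ∧ ‖v' s‖ ≤ B ∧ ‖v'' s‖ ≤ B) (y : ℝ) :
    (1 + y ^ 2) * ‖fourierUnit (fun s => p s * v s) y‖ ≤ 2 * (4 * (A * B)) := by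
  have hAB {a b : ℂ} (ha : ‖a‖ ≤ A) (hb : ‖b‖ ≤ B) : ‖a * b‖ ≤ A * B := by
    rw [norm_mul]
    exact mul_le_mul ha hb (norm_nonneg _) ((norm_nonneg _).trans ha)
  have hcont {w w' : ℝ → ℂ} (h : ∀ s ∈ Set.Icc (0 : ℝ) 1, HasDerivAt w (w' s) s) :
      ContinuousOn w (Set.Icc 0 1) := fun s hs => (h s hs).continuousAt.continuousWithinAt
  refine one_add_sq_mul_norm_fourierUnit_le (fun s hs => (hp s hs).mul (hv s hs))
    (fun s hs => ((hp' s hs).mul (hv s hs)).add ((hp s hs).mul (hv' s hs)))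
    (((hp''.mul (hcont hv)).add ((hcont hp').mul (hcont hv'))).add
      (((hcont hp').mul (hcont hv')).add ((hcont hp).mul hv'')))
    (by simp [h0]) (by simp [h1]) (by simp [h0, h0']) (by simp [h1, h1'])
    (fun s hs => ?_) (fun s hs => ?_) y
  · have : ‖(p * v) s‖ ≤ A * B := hAB (hA s hs).1 (hB s hs).1
    linarith [(norm_nonneg _).trans this]
  · obtain ⟨hp₀, hp₁, hp₂⟩ := hA s hs
    obtain ⟨hv₀, hv₁, hv₂⟩ := hB s hs
    calc ‖p'' s * v s + p' s * v' s + (p' s * v' s + p s * v'' s)‖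
        ≤ A * B + A * B + (A * B + A * B) :=
          norm_add_le_of_le (norm_add_le_of_le (hAB hp₂ hv₀) (hAB hp₁ hv₁))
            (norm_add_le_of_le (hAB hp₁ hv₁) (hAB hp₀ hv₂))
      _ = 4 * (A * B) := by ring

lemma norm_mul_sq_add_mul_cube_le {b c w : ℂ} (hb : ‖b‖ ≤ 2) (hc : ‖c‖ ≤ 2) (hw : ‖w‖ ≤ 2) :
    ‖-c * w ^ 2 + 2 * b ^ 2 * w ^ 3‖ ≤ 72 := by
  have hcw : ‖-c * w ^ 2‖ ≤ 2 * 2 ^ 2 := by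
    rw [norm_mul, norm_neg, norm_pow]
    gcongr
  have hbw : ‖2 * b ^ 2 * w ^ 3‖ ≤ 2 * 2 ^ 2 * 2 ^ 3 := by
    rw [norm_mul, norm_mul, norm_pow, norm_pow, RCLike.norm_two]
    gcongr
  exact (norm_add_le_of_le hcw hbw).trans_eq (by norm_num)

lemma exists_hasDerivAt_inv_bounds {ψ : ℝ → ℂ} (hψ : ContDiff ℝ 2 ψ)
    (hhalf : ∀ s ∈ Set.Icc (0 : ℝ) 1, 1 / 2 ≤ ‖ψ s‖) (hd : ∀ s, ‖iteratedDeriv 1 ψ s‖ ≤ 2)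
    (hdd : ∀ s, ‖iteratedDeriv 2 ψ s‖ ≤ 2) :
    ∃ v' v'' : ℝ → ℂ, (∀ s ∈ Set.Icc (0 : ℝ) 1, HasDerivAt (fun s => (ψ s)⁻¹) (v' s) s) ∧
      (∀ s ∈ Set.Icc (0 : ℝ) 1, HasDerivAt v' (v'' s) s) ∧ ContinuousOn v'' (Set.Icc 0 1) ∧
      ∀ s ∈ Set.Icc (0 : ℝ) 1, ‖(ψ s)⁻¹‖ ≤ 72 ∧ ‖v' s‖ ≤ 72 ∧ ‖v'' s‖ ≤ 72 := by
  have hne (s) (hs : s ∈ Set.Icc (0 : ℝ) 1) : ψ s ≠ 0 :=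
    norm_pos_iff.1 (one_half_pos.trans_le (hhalf s hs))
  have hinv (s) (hs : s ∈ Set.Icc (0 : ℝ) 1) : ‖(ψ s)⁻¹‖ ≤ 2 := by
    rw [norm_inv]
    exact inv_le_of_inv_le₀ two_pos (by linarith [hhalf s hs])
  have hψ1 (s : ℝ) : HasDerivAt ψ (iteratedDeriv 1 ψ s) s := by
    rw [iteratedDeriv_one]
    exact (hψ.differentiable two_ne_zero s).hasDerivAt
  have hψ2 (s : ℝ) : HasDerivAt (iteratedDeriv 1 ψ) (iteratedDeriv 2 ψ s) s := by
    rw [iteratedDeriv_succ (n := 1)]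
    exact (hψ.differentiable_iteratedDeriv 1 (by norm_num) s).hasDerivAt
  have hψ2c : Continuous (iteratedDeriv 2 ψ) := hψ.continuous_iteratedDeriv 2 le_rfl
  have hv (s) (hs : s ∈ Set.Icc (0 : ℝ) 1) :
      HasDerivAt (fun s => (ψ s)⁻¹) (-iteratedDeriv 1 ψ s * (ψ s)⁻¹ ^ 2) s := by
    simpa only [inv_pow, ← div_eq_mul_inv] using (hψ1 s).fun_inv (hne s hs)
  have hcont : ContinuousOn (fun s => (ψ s)⁻¹) (Set.Icc 0 1) :=
    fun s hs => (hv s hs).continuousAt.continuousWithinAt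
  refine ⟨fun s => -iteratedDeriv 1 ψ s * (ψ s)⁻¹ ^ 2, fun s => -iteratedDeriv 2 ψ s * (ψ s)⁻¹ ^ 2
    + 2 * iteratedDeriv 1 ψ s ^ 2 * (ψ s)⁻¹ ^ 3, hv, fun s hs => ?_, ?_, fun s hs =>
    ⟨(hinv s hs).trans (by norm_num), ?_,
      norm_mul_sq_add_mul_cube_le (hd s) (hdd s) (hinv s hs)⟩⟩
  · refine ((hψ2 s).fun_neg.fun_mul ((hv s hs).fun_pow 2)).congr_deriv ?_
    push_cast
    ring
  · have := hψ.continuous_iteratedDeriv 1 one_le_two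
    exact (hψ2c.neg.continuousOn.mul (hcont.pow 2)).add
      ((continuous_const.mul (this.pow 2)).continuousOn.mul (hcont.pow 3))
  · simpa using norm_mul_sq_add_mul_cube_le (b := 0) (by simp) (hd s) (hinv s hs)

lemma norm_iteratedDeriv_charFun_le {ν : Measure ℝ} [IsProbabilityMeasure ν] (hν : MemLp id 2 ν)
    (hν1 : ∫ x, x ^ 2 ∂ν ≤ 1) (s : ℝ) {n : ℕ} (hn : n ≤ 2) :
    ‖iteratedDeriv n (charFun ν) s‖ ≤ 2 := by
  have hpow (x : ℝ) : |x| ^ n ≤ 1 + x ^ 2 := by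
    interval_cases n <;> nlinarith [sq_abs x, sq_nonneg (|x| - 1), sq_nonneg x]
  have hsq : Integrable (fun x : ℝ => x ^ 2) ν := hν.integrable_sq
  have hint : Integrable (fun x : ℝ => 1 + x ^ 2) ν := (integrable_const 1).add hsq
  rw [iteratedDeriv_charFun (hν.mono_exponent (by exact_mod_cast hn)), norm_mul, norm_pow, norm_I,
    one_pow, one_mul]
  calc ‖∫ x : ℝ, x ^ n * exp (s * x * I) ∂ν‖ ≤ ∫ x, 1 + x ^ 2 ∂ν :=
        norm_integral_le_of_norm_le hint (ae_of_all _ fun x => by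
          rw [norm_mul, ← ofReal_mul, norm_exp_ofReal_mul_I, mul_one, norm_pow, norm_real]
          exact hpow x)
    _ = 1 + ∫ x, x ^ 2 ∂ν := by
        rw [integral_add (integrable_const 1) hsq, integral_const, probReal_univ, one_smul]
    _ ≤ 2 := by linarith

lemma half_le_norm_charFun {ν : Measure ℝ} [IsProbabilityMeasure ν] (hν : MemLp id 2 ν)
    (hν1 : ∫ x, x ^ 2 ∂ν ≤ 1) {s : ℝ} (hs : s ∈ Set.Icc (0 : ℝ) 1) :
    1 / 2 ≤ ‖charFun ν s‖ := by
  have hint : Integrable (fun x : ℝ => exp (s * x * I)) ν :=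
    (integrable_const (1 : ℝ)).mono' (by fun_prop) (ae_of_all _ fun x => by
      rw [← ofReal_mul, norm_exp_ofReal_mul_I])
  have hsq : Integrable (fun x : ℝ => x ^ 2 / 2) ν := hν.integrable_sq.div_const 2
  have hcos (x : ℝ) : 1 - x ^ 2 / 2 ≤ (exp (s * x * I)).re := by
    rw [← ofReal_mul, exp_ofReal_mul_I_re]
    nlinarith [Real.one_sub_sq_div_two_le_cos (x := s * x), mul_nonneg hs.1 hs.1, sq_nonneg x,
      mul_le_mul hs.2 hs.2 hs.1 zero_le_one]
  calc 1 / 2 ≤ 1 - (∫ x, x ^ 2 ∂ν) / 2 := by linarith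
    _ = ∫ x, (1 - x ^ 2 / 2) ∂ν := by
        rw [integral_sub (integrable_const 1) hsq, integral_const, integral_div, probReal_univ,
          one_smul]
    _ ≤ ∫ x : ℝ, (exp (s * x * I)).re ∂ν :=
        integral_mono ((integrable_const 1).sub hsq) hint.re hcos
    _ = (charFun ν s).re := by rw [charFun_apply_real]; exact integral_re hint
    _ ≤ _ := re_le_norm _

lemma exists_fourierUnit_div_charFun_bounds {P : ℝ[X]} (h0 : P.eval 0 = 0)
    (h1 : P.eval 1 = 0) (h0' : P.derivative.eval 0 = 0) (h1' : P.derivative.eval 1 = 0) :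
    ∃ W, ∀ (ν : Measure ℝ) [IsProbabilityMeasure ν], MemLp id 2 ν → ∫ x, x ^ 2 ∂ν ≤ 1 →
      (∀ s ∈ Set.Icc (0 : ℝ) 1, ‖(P.eval s : ℝ) * (charFun ν s)⁻¹‖ ≤ W) ∧
      ∀ y, (1 + y ^ 2) * ‖fourierUnit (fun s => (P.eval s : ℝ) * (charFun ν s)⁻¹) y‖ ≤ W := by
  obtain ⟨A₀, hA₀⟩ := exists_forall_norm_eval_le P
  obtain ⟨A₁, hA₁⟩ := exists_forall_norm_eval_le P.derivative
  obtain ⟨A₂, hA₂⟩ := exists_forall_norm_eval_le P.derivative.derivative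
  have hA₀0 := (norm_nonneg _).trans (hA₀ 0 (by simp))
  have hA₁0 := (norm_nonneg _).trans (hA₁ 0 (by simp))
  have hA₂0 := (norm_nonneg _).trans (hA₂ 0 (by simp))
  have hP (Q : ℝ[X]) (s : ℝ) :
      HasDerivAt (fun s => ((Q.eval s : ℝ) : ℂ)) (Q.derivative.eval s : ℝ) s :=
    (Q.hasDerivAt s).ofReal_comp
  refine ⟨2 * (4 * ((A₀ + A₁ + A₂) * 72)), fun ν _ hν hν1 => ?_⟩
  obtain ⟨v', v'', hv, hv', hv'', hB⟩ := exists_hasDerivAt_inv_bounds (contDiff_charFun hν)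
    (fun s => half_le_norm_charFun hν hν1)
    (fun s => norm_iteratedDeriv_charFun_le hν hν1 s one_le_two)
    (fun s => norm_iteratedDeriv_charFun_le hν hν1 s le_rfl)
  refine ⟨fun s hs => ?_, one_add_sq_mul_norm_fourierUnit_mul_le
    (fun s _ => hP P s) (fun s _ => hP P.derivative s)
    (continuous_ofReal.comp P.derivative.derivative.continuous).continuousOn
    (by simp [h0]) (by simp [h1]) (by simp [h0']) (by simp [h1']) hv hv' hv''
    (fun s hs => ⟨by linarith [hA₀ s hs], by linarith [hA₁ s hs], by linarith [hA₂ s hs]⟩) hB⟩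
  calc ‖(P.eval s : ℝ) * (charFun ν s)⁻¹‖ ≤ A₀ * 72 := by
        rw [norm_mul]
        gcongr
        exacts [hA₀ s hs, (hB s hs).1]
    _ ≤ 2 * (4 * ((A₀ + A₁ + A₂) * 72)) := by linarith

end FourierUnit

section FourierUnitDeriv

open Complex

lemma hasDerivAt_fourierUnit {u : ℝ → ℂ} (hu : ContinuousOn u (Set.Icc 0 1)) (y : ℝ) :
    HasDerivAt (fourierUnit u) (fourierUnit (fun s => I * s * u s) y) y := by
  rw [← Set.uIcc_of_le zero_le_one] at hu
  have hcont (y : ℝ) : IntervalIntegrable (fun s : ℝ => u s * exp (I * y * s)) volume 0 1 :=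
    (hu.mul (by fun_prop)).intervalIntegrable
  have hcont' (y : ℝ) :
      IntervalIntegrable (fun s : ℝ => I * s * u s * exp (I * y * s)) volume 0 1 :=
    (((by fun_prop : Continuous fun s : ℝ => I * s).continuousOn.mul hu).mul
      (by fun_prop)).intervalIntegrable
  refine (intervalIntegral.hasDerivAt_integral_of_dominated_loc_of_deriv_le
    (F' := fun (y s : ℝ) => I * s * u s * exp (I * y * s)) univ_mem
    (Eventually.of_forall fun y => (hcont y).aestronglyMeasurable_restrict_uIoc) (hcont y)
    (hcont' y).aestronglyMeasurable_restrict_uIoc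
    (bound := fun s : ℝ => ‖I * s * u s‖) (ae_of_all _ fun s _ y _ => ?_)
    ((by fun_prop : Continuous fun s : ℝ => I * s).continuousOn.mul hu).norm.intervalIntegrable
    (ae_of_all _ fun s _ y _ => ?_)).2
  · rw [norm_mul, norm_exp_I_mul_mul, mul_one]
  · have := (((ofRealCLM.hasDerivAt (x := y)).const_mul I).mul_const (s : ℂ)).cexp.const_mul (u s)
    refine this.congr_deriv ?_
    simp
    ring

lemma iteratedDeriv_fourierUnit {u : ℝ → ℂ} (hu : ContinuousOn u (Set.Icc 0 1)) (n : ℕ) :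
    iteratedDeriv n (fourierUnit u) = fourierUnit (fun s => (I * s) ^ n * u s) := by
  induction n generalizing u with
  | zero => simp
  | succ n ih =>
    rw [iteratedDeriv_succ', funext fun y => (hasDerivAt_fourierUnit hu y).deriv,
      ih (u := fun s => I * s * u s)
        ((by fun_prop : Continuous fun s : ℝ => I * s).continuousOn.mul hu)]
    simp only [pow_succ, mul_assoc]

lemma contDiff_fourierUnit {u : ℝ → ℂ} (hu : ContinuousOn u (Set.Icc 0 1)) (n : ℕ) :
    ContDiff ℝ n (fourierUnit u) := by
  refine contDiff_of_differentiable_iteratedDeriv (n := n) fun m _ y => ?_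
  rw [iteratedDeriv_fourierUnit hu]
  exact (hasDerivAt_fourierUnit
    ((by fun_prop : Continuous fun s : ℝ => (I * s) ^ m).continuousOn.mul hu) y).differentiableAt

lemma norm_iteratedDeriv_fourierUnit_le {u : ℝ → ℂ} {W : ℝ} (hu : ContinuousOn u (Set.Icc 0 1))
    (hW : ∀ s ∈ Set.Icc (0 : ℝ) 1, ‖u s‖ ≤ W) (n : ℕ) (y : ℝ) :
    ‖iteratedDeriv n (fourierUnit u) y‖ ≤ W := by
  rw [iteratedDeriv_fourierUnit hu]
  refine norm_fourierUnit_le (fun s hs => ?_) y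
  rw [norm_mul, norm_pow, norm_mul, norm_I, one_mul, norm_real, Real.norm_of_nonneg hs.1]
  exact (mul_le_of_le_one_left (norm_nonneg _) (pow_le_one₀ hs.1 hs.2)).trans (hW s hs)

end FourierUnitDeriv

section PolyGauss

open Polynomial

/-- The product `P𝔤` of a polynomial and the standard Gaussian density, the shape of each term of
an Edgeworth expansion. -/
def polyGauss (P : ℝ[X]) (x : ℝ) : ℂ := ((P.eval x * gaussDensity x : ℝ) : ℂ)

lemma gaussDensity_nonneg (x : ℝ) : 0 ≤ gaussDensity x := by
  unfold gaussDensity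
  positivity

lemma hasDerivAt_gaussDensity (x : ℝ) : HasDerivAt gaussDensity (-x * gaussDensity x) x := by
  have := (((hasDerivAt_pow 2 x).fun_neg.div_const 2).exp).const_mul (√(2 * Real.pi))⁻¹
  refine this.congr_deriv ?_
  rw [gaussDensity]
  push_cast
  ring

lemma hasDerivAt_polyGauss (P : ℝ[X]) (x : ℝ) :
    HasDerivAt (polyGauss P) (polyGauss (derivative P - X * P) x) x := by
  refine ((P.hasDerivAt x).mul (hasDerivAt_gaussDensity x)).ofReal_comp.congr_deriv ?_
  simp only [polyGauss, eval_sub, eval_mul, eval_X]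
  congr 1
  ring

lemma exists_iteratedDeriv_polyGauss_eq (P : ℝ[X]) (n : ℕ) :
    ∃ Q, iteratedDeriv n (polyGauss P) = polyGauss Q := by
  induction n generalizing P with
  | zero => exact ⟨P, iteratedDeriv_zero⟩
  | succ n ih =>
    rw [iteratedDeriv_succ', funext fun x => (hasDerivAt_polyGauss P x).deriv]
    exact ih _

lemma contDiff_polyGauss (P : ℝ[X]) (n : ℕ) : ContDiff ℝ n (polyGauss P) :=
  contDiff_of_differentiable_iteratedDeriv (n := n) fun m _ x => by
    obtain ⟨Q, hQ⟩ := exists_iteratedDeriv_polyGauss_eq P m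
    rw [hQ]
    exact (hasDerivAt_polyGauss Q x).differentiableAt

lemma exists_one_add_sq_mul_pow_mul_gaussDensity_le (i : ℕ) :
    ∃ M, ∀ x : ℝ, (1 + x ^ 2) * (|x| ^ i * gaussDensity x) ≤ M := by
  refine ⟨2 ^ (i + 1) * (i + 1).factorial * Real.exp (1 / 2) * (√(2 * Real.pi))⁻¹, fun x => ?_⟩
  have habs : |x| ≤ 1 + x ^ 2 := by nlinarith [sq_nonneg (|x| - 1), sq_abs x]
  have hexp := Real.pow_div_factorial_le_exp (x := (1 + x ^ 2) / 2) (by positivity) (i + 1)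
  rw [div_le_iff₀ (by positivity), div_pow, div_le_iff₀ (by positivity)] at hexp
  calc (1 + x ^ 2) * (|x| ^ i * gaussDensity x)
      ≤ (1 + x ^ 2) * ((1 + x ^ 2) ^ i * gaussDensity x) := by
        gcongr
        exact gaussDensity_nonneg x
    _ = (1 + x ^ 2) ^ (i + 1) * gaussDensity x := by ring
    _ ≤ Real.exp ((1 + x ^ 2) / 2) * (i + 1).factorial * 2 ^ (i + 1) * gaussDensity x := by
        gcongr
        exact gaussDensity_nonneg x
    _ = _ := by
        have : Real.exp ((1 + x ^ 2) / 2) * Real.exp (-x ^ 2 / 2) = Real.exp (1 / 2) := by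
          rw [← Real.exp_add]
          ring_nf
        rw [gaussDensity, ← this]
        ring

lemma exists_one_add_sq_mul_norm_polyGauss_le (D : ℕ) (B : ℝ) :
    ∃ M, ∀ P : ℝ[X], P.natDegree ≤ D → (∀ i, |P.coeff i| ≤ B) →
      ∀ x : ℝ, (1 + x ^ 2) * ‖polyGauss P x‖ ≤ M := by
  choose M hM using exists_one_add_sq_mul_pow_mul_gaussDensity_le
  refine ⟨∑ i ∈ Finset.range (D + 1), B * M i, fun P hD hB x => ?_⟩
  have hB0 : 0 ≤ B := (abs_nonneg _).trans (hB 0)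
  rw [polyGauss, Complex.norm_real, Real.norm_eq_abs, abs_mul,
    abs_of_nonneg (gaussDensity_nonneg x), eval_eq_sum_range' (Nat.lt_succ_of_le hD)]
  calc (1 + x ^ 2) * (|∑ i ∈ Finset.range (D + 1), P.coeff i * x ^ i| * gaussDensity x)
      ≤ (1 + x ^ 2) * ((∑ i ∈ Finset.range (D + 1), B * |x| ^ i) * gaussDensity x) := by
        gcongr
        · exact gaussDensity_nonneg x
        · refine (Finset.abs_sum_le_sum_abs _ _).trans (Finset.sum_le_sum fun i _ => ?_)
          rw [abs_mul, abs_pow]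
          gcongr
          exact hB i
    _ = ∑ i ∈ Finset.range (D + 1), B * ((1 + x ^ 2) * (|x| ^ i * gaussDensity x)) := by
        rw [Finset.sum_mul, Finset.mul_sum]
        exact Finset.sum_congr rfl fun i _ => by ring
    _ ≤ _ := Finset.sum_le_sum fun i _ => mul_le_mul_of_nonneg_left (hM i x) hB0

lemma natDegree_derivative_sub_X_mul_le {P : ℝ[X]} {D : ℕ} (hD : P.natDegree ≤ D) :
    (derivative P - X * P).natDegree ≤ D + 1 :=
  (natDegree_sub_le_of_le ((natDegree_derivative_le P).trans (by omega : _ ≤ D + 1))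
    ((natDegree_mul_le_of_le natDegree_X_le hD).trans_eq (add_comm 1 D))).trans_eq (max_self _)

lemma abs_coeff_derivative_sub_X_mul_le {P : ℝ[X]} {D : ℕ} {B : ℝ} (hD : P.natDegree ≤ D)
    (hB : ∀ i, |P.coeff i| ≤ B) (i : ℕ) : |(derivative P - X * P).coeff i| ≤ (D + 1) * B := by
  have hB0 : 0 ≤ B := (abs_nonneg _).trans (hB 0)
  have hder : |(derivative P).coeff i| ≤ B * D := by
    rw [coeff_derivative]
    rcases lt_or_ge i D with h | h
    · rw [abs_mul, abs_of_nonneg (by positivity : (0 : ℝ) ≤ i + 1)]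
      gcongr
      exacts [hB _, by exact_mod_cast h]
    · rw [coeff_eq_zero_of_natDegree_lt (by omega), zero_mul, abs_zero]
      positivity
  have hX : |(X * P).coeff i| ≤ B := by
    cases i with
    | zero => simpa using hB0
    | succ i => simpa using hB i
  rw [coeff_sub]
  linarith [abs_sub ((derivative P).coeff i) ((X * P).coeff i)]

lemma exists_one_add_sq_mul_norm_iteratedDeriv_polyGauss_le (D n : ℕ) (B : ℝ) :
    ∃ M, ∀ P : ℝ[X], P.natDegree ≤ D → (∀ i, |P.coeff i| ≤ B) →
      ∀ x : ℝ, (1 + x ^ 2) * ‖iteratedDeriv n (polyGauss P) x‖ ≤ M := by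
  induction n generalizing D B with
  | zero => exact exists_one_add_sq_mul_norm_polyGauss_le D B
  | succ n ih =>
    obtain ⟨M, hM⟩ := ih (D + 1) ((D + 1) * B)
    refine ⟨M, fun P hD hB x => ?_⟩
    rw [iteratedDeriv_succ', funext fun x => (hasDerivAt_polyGauss P x).deriv]
    exact hM _ (natDegree_derivative_sub_X_mul_le hD) (abs_coeff_derivative_sub_X_mul_le hD hB) x

lemma exists_one_add_sq_mul_norm_iteratedDeriv_polyGauss_mul_le (D n : ℕ) (B W : ℝ) :
    ∃ M, ∀ P : ℝ[X], P.natDegree ≤ D → (∀ i, |P.coeff i| ≤ B) → ∀ g : ℝ → ℂ, ContDiff ℝ n g →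
      (∀ j y, ‖iteratedDeriv j g y‖ ≤ W) →
      ∀ x : ℝ, (1 + x ^ 2) * ‖iteratedDeriv n (polyGauss P * g) x‖ ≤ M := by
  choose M hM using exists_one_add_sq_mul_norm_iteratedDeriv_polyGauss_le (D := D) (B := B)
  refine ⟨∑ i ∈ Finset.range (n + 1), n.choose i * (M i * W), fun P hD hB g hg hW x => ?_⟩
  rw [iteratedDeriv_mul (contDiff_polyGauss P n).contDiffAt hg.contDiffAt]
  calc _ ≤ (1 + x ^ 2) * ∑ i ∈ Finset.range (n + 1), n.choose i *
        (‖iteratedDeriv i (polyGauss P) x‖ * ‖iteratedDeriv (n - i) g x‖) := by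
        gcongr
        refine (norm_sum_le _ _).trans_eq (Finset.sum_congr rfl fun i _ => ?_)
        rw [norm_mul, norm_mul, RCLike.norm_natCast, mul_assoc]
    _ = ∑ i ∈ Finset.range (n + 1), n.choose i *
        ((1 + x ^ 2) * ‖iteratedDeriv i (polyGauss P) x‖ * ‖iteratedDeriv (n - i) g x‖) := by
        rw [Finset.mul_sum]
        exact Finset.sum_congr rfl fun i _ => by ring
    _ ≤ _ := by
        gcongr with i
        exacts [(by positivity : (0 : ℝ) ≤ _).trans (hM i P hD hB x), hM i P hD hB x, hW _ _]

end PolyGauss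

section LatticeSum

open Complex

lemma one_add_sq_le_three_mul {x y : ℝ} (h : |x - y| ≤ 1) : 1 + x ^ 2 ≤ 3 * (1 + y ^ 2) := by
  have : (x - y) ^ 2 ≤ 1 := (sq_le_one_iff_abs_le_one _).2 h
  nlinarith [sq_nonneg (x - 2 * y)]

lemma inv_one_add_sq_le_setIntegral (a : ℝ) {σ : ℝ} (hσ : 1 ≤ σ) (k : ℤ) :
    (1 + ((k - a) / σ) ^ 2)⁻¹ ≤ ∫ y in Set.Ioc (k : ℝ) (k + 1), 3 * (1 + ((y - a) / σ) ^ 2)⁻¹ := by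
  have hconst : (1 + ((k - a) / σ) ^ 2)⁻¹ =
      ∫ _ in Set.Ioc (k : ℝ) (k + 1), (1 + ((k - a) / σ) ^ 2)⁻¹ := by simp
  have hcont : Continuous fun y : ℝ => 3 * (1 + ((y - a) / σ) ^ 2)⁻¹ := by
    fun_prop (disch := intros; positivity)
  rw [hconst]
  refine setIntegral_mono_on (by simp) (hcont.integrableOn_Icc.mono_set Set.Ioc_subset_Icc_self)
    measurableSet_Ioc fun y hy => ?_
  have hclose : |(y - a) / σ - (k - a) / σ| ≤ 1 := by
    rw [← sub_div, abs_div, abs_of_pos (by linarith : 0 < σ), div_le_one (by linarith), abs_le]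
    constructor <;> linarith [hy.1, hy.2]
  rw [← div_eq_mul_inv, inv_le_comm₀ (by positivity) (by positivity), inv_div,
    div_le_iff₀' (by norm_num)]
  exact one_add_sq_le_three_mul hclose

lemma integral_inv_one_add_sq_comp_sub_div (a : ℝ) {σ : ℝ} (hσ : 0 < σ) :
    ∫ y : ℝ, (1 + ((y - a) / σ) ^ 2)⁻¹ = σ * Real.pi := by
  rw [integral_sub_right_eq_self (fun y : ℝ => (1 + (y / σ) ^ 2)⁻¹) a,
    Measure.integral_comp_div (fun y : ℝ => (1 + y ^ 2)⁻¹) σ, integral_univ_inv_one_add_sq,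
    abs_of_pos hσ, smul_eq_mul]

lemma sum_inv_one_add_sq_le (a : ℝ) {σ : ℝ} (hσ : 1 ≤ σ) (F : Finset ℤ) :
    ∑ k ∈ F, (1 + ((k - a) / σ) ^ 2)⁻¹ ≤ 10 * σ := by
  have hint : Integrable fun y : ℝ => 3 * (1 + ((y - a) / σ) ^ 2)⁻¹ :=
    ((integrable_inv_one_add_sq.comp_div (by linarith)).comp_sub_right a).const_mul 3
  calc ∑ k ∈ F, (1 + ((k - a) / σ) ^ 2)⁻¹
      ≤ ∑ k ∈ F, ∫ y in Set.Ioc (k : ℝ) (k + 1), 3 * (1 + ((y - a) / σ) ^ 2)⁻¹ :=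
        Finset.sum_le_sum fun k _ => inv_one_add_sq_le_setIntegral a hσ k
    _ = ∫ y in ⋃ k ∈ F, Set.Ioc (k : ℝ) (k + 1), 3 * (1 + ((y - a) / σ) ^ 2)⁻¹ :=
        (integral_biUnion_finset _ (fun _ _ => measurableSet_Ioc)
          (fun i _ j _ hij => Set.pairwise_disjoint_Ioc_intCast ℝ hij)
          fun _ _ => hint.integrableOn).symm
    _ ≤ ∫ y, 3 * (1 + ((y - a) / σ) ^ 2)⁻¹ :=
        setIntegral_le_integral hint (ae_of_all _ fun y => by positivity)
    _ = 3 * (σ * Real.pi) := by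
        rw [integral_const_mul, integral_inv_one_add_sq_comp_sub_div a (by linarith)]
    _ ≤ 10 * σ := by nlinarith [Real.pi_lt_d2]

lemma summable_of_one_add_sq_mul_norm_le (a : ℝ) {σ B : ℝ} (hσ : 1 ≤ σ) {v : ℤ → ℂ}
    (hv : ∀ k : ℤ, (1 + ((k - a) / σ) ^ 2) * ‖v k‖ ≤ B) : Summable v := by
  refine .of_norm_bounded ((summable_of_sum_le (fun k => by positivity)
    (sum_inv_one_add_sq_le a hσ)).mul_left B) fun k => ?_
  rw [← div_eq_mul_inv, le_div_iff₀' (by positivity)]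
  exact hv k

lemma norm_tsum_le_of_one_add_sq_mul_norm_le (a : ℝ) {σ B : ℝ} (hσ : 1 ≤ σ) {v : ℤ → ℂ}
    (hv : ∀ k : ℤ, (1 + ((k - a) / σ) ^ 2) * ‖v k‖ ≤ B) : ‖∑' k, v k‖ ≤ B * (10 * σ) := by
  have hB : 0 ≤ B := (by positivity : (0 : ℝ) ≤ _).trans (hv 0)
  have hsum : Summable fun k : ℤ => (1 + ((k - a) / σ) ^ 2)⁻¹ :=
    summable_of_sum_le (fun k => by positivity) (sum_inv_one_add_sq_le a hσ)
  calc ‖∑' k, v k‖ ≤ ∑' k : ℤ, B * (1 + ((k - a) / σ) ^ 2)⁻¹ :=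
        tsum_of_norm_bounded (hsum.mul_left B).hasSum fun k => by
          rw [← div_eq_mul_inv, le_div_iff₀' (by positivity)]
          exact hv k
    _ ≤ _ := by
        rw [tsum_mul_left]
        gcongr
        exact hsum.tsum_le_of_sum_le (sum_inv_one_add_sq_le a hσ)

lemma hasSum_exp_mul_comp_add {t a σ : ℝ} {G : ℝ → ℂ} {T : ℂ}
    (hG : HasSum (fun k : ℤ => exp (I * t * k) * G ((k - a) / σ)) T) :
    HasSum (fun k : ℤ => exp (I * t * k) * G ((k - a) / σ + 1 / σ)) (exp (-(I * t)) * T) := by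
  refine (((Equiv.addRight (1 : ℤ)).hasSum_iff.2 hG).mul_left (exp (-(I * t)))).congr_fun
    fun k => ?_
  simp only [Function.comp_apply, Equiv.coe_addRight]
  rw [← mul_assoc, ← exp_add]
  congr 2
  · push_cast
    ring
  · push_cast
    ring

lemma hasSum_exp_mul_fwdDiff_iterate {t a σ : ℝ} {G : ℝ → ℂ} {T : ℂ} (R : ℕ)
    (hG : HasSum (fun k : ℤ => exp (I * t * k) * G ((k - a) / σ)) T) :
    HasSum (fun k : ℤ => exp (I * t * k) * (fwdDiff (1 / σ))^[R] G ((k - a) / σ))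
      ((exp (-(I * t)) - 1) ^ R * T) := by
  induction R generalizing G T with
  | zero => simpa using hG
  | succ R ih =>
    rw [Function.iterate_succ_apply, pow_succ, mul_assoc, sub_mul (exp _), one_mul]
    refine ih (((hasSum_exp_mul_comp_add hG).sub hG).congr_fun fun k => ?_)
    rw [fwdDiff, mul_sub]

lemma one_add_sq_mul_norm_fwdDiff_le {G : ℝ → ℂ} {B h : ℝ} (hG : Differentiable ℝ G)
    (hB : ∀ x, (1 + x ^ 2) * ‖deriv G x‖ ≤ B) (h0 : 0 ≤ h) (h1 : h ≤ 1) (x : ℝ) :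
    (1 + x ^ 2) * ‖fwdDiff h G x‖ ≤ 3 * h * B := by
  have hderiv : ∀ y ∈ Set.Icc x (x + h), ‖deriv G y‖ ≤ 3 * B / (1 + x ^ 2) := fun y hy => by
    rw [le_div_iff₀' (by positivity)]
    have hxy := one_add_sq_le_three_mul (x := x) (y := y)
      (abs_le.2 ⟨by linarith [hy.2], by linarith [hy.1]⟩)
    nlinarith [hB y, norm_nonneg (deriv G y)]
  have hmean := (convex_Icc x (x + h)).norm_image_sub_le_of_norm_deriv_le
    (fun y _ => hG y) hderiv (Set.left_mem_Icc.2 (by linarith)) (Set.right_mem_Icc.2 (by linarith))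
  rw [add_sub_cancel_left, Real.norm_of_nonneg h0, div_mul_eq_mul_div,
    le_div_iff₀' (by positivity)] at hmean
  rw [fwdDiff]
  linarith

lemma iteratedDeriv_fwdDiff {G : ℝ → ℂ} {n : ℕ} (hG : ContDiff ℝ n G) (h : ℝ) :
    iteratedDeriv n (fwdDiff h G) = fwdDiff h (iteratedDeriv n G) := by
  ext x
  unfold fwdDiff
  rw [iteratedDeriv_fun_sub (by fun_prop) hG.contDiffAt, iteratedDeriv_comp_add_const]

lemma one_add_sq_mul_norm_fwdDiff_iterate_le {G : ℝ → ℂ} {B h : ℝ} {R : ℕ} (hG : ContDiff ℝ R G)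
    (hB : ∀ x, (1 + x ^ 2) * ‖iteratedDeriv R G x‖ ≤ B) (h0 : 0 ≤ h) (h1 : h ≤ 1) (x : ℝ) :
    (1 + x ^ 2) * ‖(fwdDiff h)^[R] G x‖ ≤ (3 * h) ^ R * B := by
  induction R generalizing G B with
  | zero => simpa using hB x
  | succ R ih =>
    have hGR : ContDiff ℝ R G := hG.of_le (by exact_mod_cast R.le_succ)
    rw [Function.iterate_succ_apply, pow_succ (3 * h), mul_assoc _ (3 * h)]
    refine ih ?_ fun y => ?_
    · unfold fwdDiff
      fun_prop
    · rw [iteratedDeriv_fwdDiff hGR]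
      refine one_add_sq_mul_norm_fwdDiff_le
        (hG.differentiable_iteratedDeriv R (by exact_mod_cast R.lt_succ_self)) (fun x => ?_) h0 h1 y
      rw [← iteratedDeriv_succ]
      exact hB x

lemma norm_tsum_exp_mul_le {t a σ B : ℝ} {R : ℕ} {G : ℝ → ℂ} (ht : exp (I * t) ≠ 1) (hσ : 1 ≤ σ)
    (hG : ContDiff ℝ R G) (hB : ∀ x, (1 + x ^ 2) * ‖G x‖ ≤ B)
    (hBR : ∀ x, (1 + x ^ 2) * ‖iteratedDeriv R G x‖ ≤ B) :
    ‖∑' k : ℤ, exp (I * t * k) * G ((k - a) / σ)‖ ≤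
      (3 / ‖exp (-(I * t)) - 1‖) ^ R * (10 * B) * (σ * σ⁻¹ ^ R) := by
  have hne : 0 < ‖exp (-(I * t)) - 1‖ := by
    rw [norm_pos_iff, sub_ne_zero, exp_neg]
    exact fun h => ht (inv_eq_one.1 h)
  have hnorm (c : ℂ) (k : ℤ) : ‖exp (I * t * k) * c‖ = ‖c‖ := by
    rw [norm_mul, norm_exp_I_mul_int, one_mul]
  have hsum := hasSum_exp_mul_fwdDiff_iterate R
    (summable_of_one_add_sq_mul_norm_le (v := fun k : ℤ => exp (I * t * k) * G ((k - a) / σ)) a hσ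
      fun k => (hnorm _ k).symm ▸ hB _).hasSum
  have hle := norm_tsum_le_of_one_add_sq_mul_norm_le (B := (3 * (1 / σ)) ^ R * B) a hσ fun k =>
    (congr_arg _ (hnorm _ k)).trans_le (one_add_sq_mul_norm_fwdDiff_iterate_le hG hBR
      (by positivity) ((div_le_one (by linarith)).2 hσ) ((k - a) / σ))
  rw [hsum.tsum_eq, norm_mul, norm_pow, ← le_div_iff₀' (by positivity)] at hle
  refine hle.trans_eq ?_
  rw [div_pow, mul_pow, one_div]
  ring

end LatticeSum

section LatticeVariable

open Complex Polynomial

variable {μ : Measure Ω} {Y : Ω → ℤ}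

lemma measurable_intCast_comp (hY : Measurable Y) : Measurable fun ω => (Y ω : ℝ) :=
  (measurable_from_top (f := fun k : ℤ => (k : ℝ))).comp hY

lemma charFun_map_sub_div (hY : Measurable Y) (a σ s : ℝ) :
    charFun (μ.map fun ω => (Y ω - a) / σ) s =
      exp (-(I * s * (a / σ))) * complexCharFun μ Y (s / σ) := by
  rw [charFun_apply_real,
    integral_map (((measurable_intCast_comp hY).sub_const a).div_const σ).aemeasurable
      (by fun_prop), complexCharFun, ← integral_const_mul]
  refine integral_congr_ae (ae_of_all _ fun ω => ?_)
  simp only [← exp_add]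
  push_cast
  ring_nf

variable [IsFiniteMeasure μ]

lemma differentiable_complexCharFun (hY : Measurable Y) {R : ℝ} (hR : ∀ ω, |(Y ω : ℝ)| ≤ R) :
    Differentiable ℂ (complexCharFun μ Y) := by
  have hset : integrableExpSet (fun ω => (Y ω : ℝ)) μ = Set.univ :=
    Set.eq_univ_of_forall fun t => integrable_exp_mul_of_mem_Icc
      (measurable_intCast_comp hY).aemeasurable (ae_of_all _ fun ω => abs_le.1 (hR ω))
  have hmgf : Differentiable ℂ (complexMGF (fun ω => (Y ω : ℝ)) μ) := by
    rw [← differentiableOn_univ]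
    simpa [hset] using differentiableOn_complexMGF (X := fun ω => (Y ω : ℝ)) (μ := μ)
  exact hmgf.comp (differentiable_id.const_mul I)

lemma intervalIntegral_mul_integral_exp_eq {u : ℝ → ℂ} (hu : ContinuousOn u (Set.Icc 0 1))
    {g : Ω → ℂ} (hg : Integrable g μ) {Z : Ω → ℝ} (hZ : Measurable Z) :
    ∫ s in (0 : ℝ)..1, u s * ∫ ω, g ω * exp (I * Z ω * s) ∂μ =
      ∫ ω, g ω * fourierUnit u (Z ω) ∂μ := by
  rw [← Set.uIcc_of_le zero_le_one] at hu
  have hprod : Integrable (Function.uncurry fun (s : ℝ) ω => u s * (g ω * exp (I * Z ω * s)))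
      ((volume.restrict (Set.uIoc 0 1)).prod μ) := by
    have hexp : Measurable fun p : ℝ × Ω => exp (I * Z p.2 * p.1) := by fun_prop
    have hug : Integrable (fun p : ℝ × Ω => u p.1 * g p.2)
        ((volume.restrict (Set.uIoc 0 1)).prod μ) :=
      hu.intervalIntegrable.def'.mul_prod hg
    refine (hug.mul_bdd hexp.aestronglyMeasurable
      (ae_of_all _ fun p => (norm_exp_I_mul_mul _ _).le)).congr
      (ae_of_all _ fun p => mul_assoc _ _ _)
  simp only [fourierUnit, ← integral_const_mul, ← intervalIntegral.integral_const_mul]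
  rw [intervalIntegral_integral_swap hprod]
  simp only [mul_left_comm]

lemma integrable_exp_I_mul (hY : Measurable Y) (t : ℝ) :
    Integrable (fun ω => exp (I * t * Y ω)) μ :=
  .of_bound ((measurable_from_top (f := fun k : ℤ => exp (I * t * k))).comp
    hY).aestronglyMeasurable 1 (ae_of_all _ fun ω => (norm_exp_I_mul_int t (Y ω)).le)

lemma intervalIntegral_mul_complexCharFun_div_eq (hY : Measurable Y) {p : ℝ → ℂ} {a σ t : ℝ}
    (hu : ContinuousOn (fun s => p s * (charFun (μ.map fun ω => (Y ω - a) / σ) s)⁻¹)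
      (Set.Icc 0 1)) :
    ∫ s in (0 : ℝ)..1, p s * (complexCharFun μ Y (t + s / σ) / complexCharFun μ Y (s / σ)) =
      ∫ ω, exp (I * t * Y ω) * fourierUnit
        (fun s => p s * (charFun (μ.map fun ω => (Y ω - a) / σ) s)⁻¹) ((Y ω - a) / σ) ∂μ := by
  rw [← intervalIntegral_mul_integral_exp_eq hu (integrable_exp_I_mul hY t)
    (((measurable_intCast_comp hY).sub_const a).div_const σ)]
  refine intervalIntegral.integral_congr fun s _ => ?_
  have hshift : ∫ ω, exp (I * t * Y ω) * exp (I * ((Y ω - a) / σ : ℝ) * s) ∂μ =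
      exp (-(I * s * (a / σ))) * complexCharFun μ Y (t + s / σ) := by
    rw [complexCharFun, ← integral_const_mul]
    refine integral_congr_ae (ae_of_all _ fun ω => ?_)
    simp only [← exp_add]
    push_cast
    ring_nf
  simp only [hshift, charFun_map_sub_div hY, mul_inv]
  field_simp [exp_ne_zero]

lemma integral_comp_eq_tsum (hY : Measurable Y) {h : ℤ → ℂ} {R : ℝ} (hR : ∀ k, ‖h k‖ ≤ R) :
    ∫ ω, h (Y ω) ∂μ = ∑' k, μ.real (Y ⁻¹' {k}) * h k := by
  have hm : AEStronglyMeasurable h (μ.map Y) := (measurable_from_top (f := h)).aestronglyMeasurable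
  rw [← integral_map hY.aemeasurable hm, integral_countable (.of_bound hm R (ae_of_all _ hR))]
  simp only [map_measureReal_apply hY (measurableSet_singleton _), real_smul]

lemma norm_integral_exp_mul_le (hY : Measurable Y) {p : ℤ → ℝ} {g : ℝ → ℂ} {a σ t ε M W : ℝ}
    (hσ : 1 ≤ σ) (hp : ∀ k, |μ.real (Y ⁻¹' {k}) - p k| ≤ ε)
    (hpg : ∀ k : ℤ, (1 + ((k - a) / σ) ^ 2) * ‖p k * g ((k - a) / σ)‖ ≤ M)
    (hg : ∀ y, (1 + y ^ 2) * ‖g y‖ ≤ W) :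
    ‖∫ ω, exp (I * t * Y ω) * g ((Y ω - a) / σ) ∂μ‖ ≤
      ‖∑' k : ℤ, exp (I * t * k) * (p k * g ((k - a) / σ))‖ + ε * W * (10 * σ) := by
  have hnorm (c : ℂ) (k : ℤ) : ‖exp (I * t * k) * c‖ = ‖c‖ := by
    rw [norm_mul, norm_exp_I_mul_int, one_mul]
  have hgW (y : ℝ) : ‖g y‖ ≤ W := by nlinarith [hg y, mul_nonneg (sq_nonneg y) (norm_nonneg (g y))]
  have herr (k : ℤ) : (1 + ((k - a) / σ) ^ 2) *
      ‖exp (I * t * k) * ((μ.real (Y ⁻¹' {k}) - p k : ℝ) * g ((k - a) / σ))‖ ≤ ε * W := by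
    rw [hnorm, norm_mul, norm_real, Real.norm_eq_abs, mul_left_comm]
    exact mul_le_mul (hp k) (hg _) (by positivity) ((abs_nonneg _).trans (hp k))
  have hsplit : ∫ ω, exp (I * t * Y ω) * g ((Y ω - a) / σ) ∂μ =
      ∑' k : ℤ, (exp (I * t * k) * (p k * g ((k - a) / σ)) +
        exp (I * t * k) * ((μ.real (Y ⁻¹' {k}) - p k : ℝ) * g ((k - a) / σ))) := by
    rw [integral_comp_eq_tsum hY (h := fun k => exp (I * t * k) * g ((k - a) / σ))
      fun k => (hnorm _ k).trans_le (hgW _)]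
    refine tsum_congr fun k => ?_
    push_cast
    ring
  rw [hsplit, (summable_of_one_add_sq_mul_norm_le a hσ fun k =>
    (congr_arg _ (hnorm _ k)).trans_le (hpg k)).tsum_add
    (summable_of_one_add_sq_mul_norm_le a hσ herr)]
  exact (norm_add_le _ _).trans
    (add_le_add_right (norm_tsum_le_of_one_add_sq_mul_norm_le a hσ herr) _)

end LatticeVariable

section EdgeworthBound

open Complex Polynomial

lemma memLp_map_sub_div {μ : Measure Ω} [IsFiniteMeasure μ] {Y : Ω → ℤ} (hY : Measurable Y)
    (hY2 : MemLp (fun ω => (Y ω : ℝ)) 2 μ) (a σ : ℝ) :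
    MemLp id 2 (μ.map fun ω => (Y ω - a) / σ) := by
  rw [memLp_map_measure_iff (by fun_prop)
    (((measurable_intCast_comp hY).sub_const a).div_const σ).aemeasurable]
  exact ((hY2.sub (memLp_const a)).const_mul σ⁻¹).ae_eq
    (ae_of_all _ fun ω => (div_eq_inv_mul _ _).symm)

lemma integral_sq_map_sub_div_le_one {μ : Measure Ω} {Y : Ω → ℤ} (hY : Measurable Y) {a σ : ℝ}
    (hσ : 0 < σ) (hvar : ∫ ω, (Y ω - a) ^ 2 ∂μ ≤ σ ^ 2) :
    ∫ x, x ^ 2 ∂(μ.map fun ω => (Y ω - a) / σ) ≤ 1 := by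
  rw [integral_map (((measurable_intCast_comp hY).sub_const a).div_const σ).aemeasurable
    (by fun_prop)]
  simp only [div_pow, integral_div]
  exact (div_le_one (by positivity)).2 hvar

lemma exists_norm_tsum_polyGauss_mul_le {t : ℝ} (ht : exp (I * t) ≠ 1) (R d : ℕ) (Cb W : ℝ) :
    ∃ A, 0 ≤ A ∧ ∀ (Q : ℝ[X]), Q.natDegree ≤ d → (∀ i, |Q.coeff i| ≤ Cb) → ∀ (u : ℝ → ℂ),
      ContinuousOn u (Set.Icc 0 1) → (∀ s ∈ Set.Icc (0 : ℝ) 1, ‖u s‖ ≤ W) →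
      (∃ M, ∀ x, (1 + x ^ 2) * ‖polyGauss Q x * fourierUnit u x‖ ≤ M) ∧
      ∀ a σ : ℝ, 1 ≤ σ → ‖∑' k : ℤ, exp (I * t * k) *
        (polyGauss Q ((k - a) / σ) * fourierUnit u ((k - a) / σ))‖ ≤ A * (σ * σ⁻¹ ^ R) := by
  obtain ⟨M₀, hM₀⟩ := exists_one_add_sq_mul_norm_iteratedDeriv_polyGauss_mul_le d 0 Cb W
  obtain ⟨M, hM⟩ := exists_one_add_sq_mul_norm_iteratedDeriv_polyGauss_mul_le d R Cb W
  refine ⟨(3 / ‖exp (-(I * t)) - 1‖) ^ R * (10 * max 0 (max M₀ M)), by positivity,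
    fun Q hQ hC u hu hW => ?_⟩
  have hg := norm_iteratedDeriv_fourierUnit_le hu hW
  have h₀ := hM₀ Q hQ hC _ (contDiff_fourierUnit hu 0) hg
  have hR := hM Q hQ hC _ (contDiff_fourierUnit hu R) hg
  rw [iteratedDeriv_zero] at h₀
  exact ⟨⟨M₀, h₀⟩, fun a σ hσ => norm_tsum_exp_mul_le (G := polyGauss Q * fourierUnit u) ht hσ
    ((contDiff_polyGauss Q R).mul (contDiff_fourierUnit hu R))
    (fun x => (h₀ x).trans (by simp)) fun x => (hR x).trans (by simp)⟩

/-- The probabilities of the integer values of `Y`, seen in the coordinate `x = (k - a) / σ`, agree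
with the density `Q(x)𝔤(x)` up to `ε`; `a` and `σ` are a centering and a scale, the latter
dominating the standard deviation. -/
structure IsEdgeworthApprox (μ : Measure Ω) (Y : Ω → ℤ) (a σ ε : ℝ) (Q : ℝ[X]) : Prop where
  one_le_scale : 1 ≤ σ
  integral_sq_le : ∫ ω, (Y ω - a) ^ 2 ∂μ ≤ σ ^ 2
  abs_sub_le : ∀ k : ℤ, |μ.real (Y ⁻¹' {k}) -
    Q.eval ((k - a) / σ) * gaussDensity ((k - a) / σ)| ≤ ε

lemma exists_norm_intervalIntegral_complexCharFun_div_le {t : ℝ} (ht : exp (I * t) ≠ 1)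
    (R d : ℕ) (Cb : ℝ) {P : ℝ[X]} (h0 : P.eval 0 = 0) (h1 : P.eval 1 = 0)
    (h0' : P.derivative.eval 0 = 0) (h1' : P.derivative.eval 1 = 0) :
    ∃ A, 0 ≤ A ∧ ∀ (μ : Measure Ω) [IsProbabilityMeasure μ] (Y : Ω → ℤ) (a σ ε : ℝ) (Q : ℝ[X]),
      Measurable Y → MemLp (fun ω => (Y ω : ℝ)) 2 μ → IsEdgeworthApprox μ Y a σ ε Q →
      Q.natDegree ≤ d → (∀ i, |Q.coeff i| ≤ Cb) →
      ‖∫ s in (0 : ℝ)..1, ((P.eval s : ℝ) : ℂ) *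
        (complexCharFun μ Y (t + s / σ) / complexCharFun μ Y (s / σ))‖ ≤
        A * (ε * σ + σ * σ⁻¹ ^ R) := by
  obtain ⟨W, hW⟩ := exists_fourierUnit_div_charFun_bounds h0 h1 h0' h1'
  obtain ⟨A, hA0, hA⟩ := exists_norm_tsum_polyGauss_mul_le ht R d Cb W
  refine ⟨max A (10 * W), le_max_of_le_left hA0, fun μ _ Y a σ ε Q hY hY2 hQ hd hCb => ?_⟩
  have hσ := hQ.one_le_scale
  have hε : 0 ≤ ε := (abs_nonneg _).trans (hQ.abs_sub_le 0)
  set ν := μ.map fun ω => (Y ω - a) / σ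
  have : IsProbabilityMeasure ν := Measure.isProbabilityMeasure_map
    (((measurable_intCast_comp hY).sub_const a).div_const σ).aemeasurable
  have hν := memLp_map_sub_div hY hY2 a σ
  have hν1 := integral_sq_map_sub_div_le_one hY (by linarith) hQ.integral_sq_le
  have hu : ContinuousOn (fun s : ℝ => ((P.eval s : ℝ) : ℂ) * (charFun ν s)⁻¹) (Set.Icc 0 1) :=
    (by fun_prop : Continuous fun s : ℝ => ((P.eval s : ℝ) : ℂ)).continuousOn.mul
      (continuous_charFun.continuousOn.inv₀ fun s hs =>
        norm_pos_iff.1 (one_half_pos.trans_le (half_le_norm_charFun hν hν1 hs)))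
  obtain ⟨hbound, hdecay⟩ := hW ν hν hν1
  obtain ⟨⟨M, hM⟩, hsum⟩ := hA Q hd hCb _ hu hbound
  rw [intervalIntegral_mul_complexCharFun_div_eq hY hu]
  refine (norm_integral_exp_mul_le hY hσ hQ.abs_sub_le (fun k => hM _) hdecay).trans ?_
  calc _ ≤ A * (σ * σ⁻¹ ^ R) + ε * W * (10 * σ) := by
        gcongr
        exact hsum a σ hσ
    _ = 10 * W * (ε * σ) + A * (σ * σ⁻¹ ^ R) := by ring
    _ ≤ max A (10 * W) * (ε * σ) + max A (10 * W) * (σ * σ⁻¹ ^ R) := by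
        gcongr
        exacts [le_max_right _ _, le_max_left _ _]
    _ = _ := by ring

end EdgeworthBound

section TransferredBound

open Complex Polynomial

variable {μ : Measure Ω} {Y : Ω → ℤ} {t σ δ : ℝ}

lemma norm_ofReal_div_lt {z : ℂ} (hσ : 0 < σ) (hz : z ∈ Metric.ball 0 (δ * σ)) :
    ‖z / σ‖ < δ := by
  rw [norm_div, norm_real, Real.norm_of_nonneg hσ.le, div_lt_iff₀ hσ]
  exact mem_ball_zero_iff.1 hz

lemma differentiableOn_complexCharFun_div [IsFiniteMeasure μ] (hY : Measurable Y) {R : ℝ}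
    (hR : ∀ ω, |(Y ω : ℝ)| ≤ R) (hσ : 0 < σ)
    (hne : ∀ z : ℂ, ‖z‖ < δ → complexCharFun μ Y z ≠ 0) :
    DifferentiableOn ℂ (fun z => complexCharFun μ Y (t + z / σ) / complexCharFun μ Y (z / σ))
      (Metric.ball 0 (δ * σ)) := by
  have hdiff := differentiable_complexCharFun (μ := μ) hY hR
  exact (hdiff.comp (by fun_prop : Differentiable ℂ fun z : ℂ => t + z / σ)).differentiableOn.div
    (hdiff.comp (by fun_prop : Differentiable ℂ fun z : ℂ => z / σ)).differentiableOn
    fun z hz => hne _ (norm_ofReal_div_lt hσ hz)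

lemma complexCharFun_zero [IsProbabilityMeasure μ] : complexCharFun μ Y 0 = 1 := by
  simp [complexCharFun]

lemma exists_norm_complexCharFun_le (ht : exp (I * t) ≠ 1) (R d D : ℕ) (Cb : ℝ) (hδ : 0 < δ) :
    ∃ A, 0 ≤ A ∧ ∀ (μ : Measure Ω) [IsProbabilityMeasure μ] (Y : Ω → ℤ) (a σ ε B : ℝ) (Q : ℝ[X]),
      Measurable Y → (∃ R : ℝ, ∀ ω, |(Y ω : ℝ)| ≤ R) → IsEdgeworthApprox μ Y a σ ε Q →
      Q.natDegree ≤ d → (∀ i, |Q.coeff i| ≤ Cb) → 1 < δ * σ →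
      (∀ z : ℂ, ‖z‖ < δ → complexCharFun μ Y z ≠ 0 ∧
        ‖complexCharFun μ Y (t + z)‖ ≤ B * ‖complexCharFun μ Y z‖) →
      ‖complexCharFun μ Y t‖ ≤ A * (ε * σ + σ * σ⁻¹ ^ R + B * σ⁻¹ ^ D) := by
  obtain ⟨q, A₁, hA₁⟩ := exists_polynomial_norm_le_norm_integral_mul_add
    (w := X ^ 2 * (1 - X) ^ 2) (fun s hs => by
      have := hs.1
      have : 0 < 1 - s := sub_pos.2 hs.2
      simp only [eval_mul, eval_pow, eval_X, eval_sub, eval_one]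
      positivity) D
  obtain ⟨A₂, hA₂0, hA₂⟩ := exists_norm_intervalIntegral_complexCharFun_div_le (Ω := Ω) ht R d Cb
    (P := X ^ 2 * (1 - X) ^ 2 * q) (by simp) (by simp) (by simp) (by simp [derivative_pow])
  refine ⟨max A₂ (A₁ * δ⁻¹ ^ D), le_max_of_le_left hA₂0,
    fun μ _ Y a σ ε B Q hY ⟨b, hb⟩ hQ hd hCb hδσ hratio => ?_⟩
  have hσ : 0 < σ := zero_lt_one.trans_le hQ.one_le_scale
  have hε : 0 ≤ ε := (abs_nonneg _).trans (hQ.abs_sub_le 0)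
  have hB : 0 ≤ B := by
    simpa [complexCharFun_zero] using (norm_nonneg _).trans (hratio 0 (by simpa)).2
  have hY2 : MemLp (fun ω => (Y ω : ℝ)) 2 μ :=
    .of_bound (measurable_intCast_comp hY).aestronglyMeasurable b (ae_of_all _ hb)
  have hH := hA₁ (δ * σ) B
    (fun z => complexCharFun μ Y (t + z / σ) / complexCharFun μ Y (z / σ)) hδσ
    (differentiableOn_complexCharFun_div hY hb hσ fun z hz => (hratio z hz).1) fun z hz => by
      obtain ⟨hne, hle⟩ := hratio _ (norm_ofReal_div_lt hσ hz)
      rwa [norm_div, div_le_iff₀ (norm_pos_iff.2 hne)]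
  simp only [zero_div, add_zero, complexCharFun_zero, div_one] at hH
  calc ‖complexCharFun μ Y t‖
      ≤ A₂ * (ε * σ + σ * σ⁻¹ ^ R) + A₁ * (B * (δ * σ)⁻¹ ^ D) :=
        hH.trans (add_le_add_left (hA₂ μ Y a σ ε Q hY hY2 hQ hd hCb) _)
    _ = A₂ * (ε * σ + σ * σ⁻¹ ^ R) + A₁ * δ⁻¹ ^ D * (B * σ⁻¹ ^ D) := by
        rw [mul_inv, mul_pow]
        ring
    _ ≤ max A₂ (A₁ * δ⁻¹ ^ D) * (ε * σ + σ * σ⁻¹ ^ R) +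
        max A₂ (A₁ * δ⁻¹ ^ D) * (B * σ⁻¹ ^ D) := by
        gcongr
        exacts [le_max_left _ _, le_max_right _ _]
    _ = _ := by ring

end TransferredBound

section PartialSums

open Polynomial

variable {μ : Measure Ω} {X : ℕ → Ω → E} {κ : ℕ → Kernel E E} {f : ℕ → E → ℤ} {C t : ℝ} {K r : ℕ}

lemma measurable_S (hX : ∀ n, Measurable (X n)) (hf : ∀ n, Measurable (f n)) (N : ℕ) :
    Measurable (S X f N) :=
  Finset.measurable_sum _ fun n _ => (hf n).comp (hX n)

lemma abs_S_le {Ω E : Type*} {X : ℕ → Ω → E} {f : ℕ → E → ℤ} (hb : ∀ n ω, |f n (X n ω)| ≤ K)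
    (N : ℕ) (ω : Ω) : |(S X f N ω : ℝ)| ≤ N * K := by
  have : |S X f N ω| ≤ N * K :=
    (Finset.abs_sum_le_sum_abs _ _).trans ((Finset.sum_le_card_nsmul (Finset.Icc 1 N) _ (K : ℤ)
      fun n _ => hb n ω).trans_eq (by simp))
  exact_mod_cast this

lemma integral_sq_S_sub_meanS_eq {E : Type*} {X : ℕ → Ω → E} {f : ℕ → E → ℤ} {N : ℕ}
    (hS : Measurable (S X f N)) :
    ∫ ω, (S X f N ω - meanS μ X f N) ^ 2 ∂μ = sigN μ X f N ^ 2 := by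
  rw [sigN, VN, Real.sq_sqrt (variance_nonneg _ _),
    variance_eq_integral (measurable_intCast_comp hS).aemeasurable]
  rfl

lemma Edgeworth.exists_isEdgeworthApprox (hE : Edgeworth μ X f r) (hX : ∀ n, Measurable (X n))
    (hf : ∀ n, Measurable (f n)) :
    ∃ d Cb, ∀ ε > 0, ∀ᶠ N in atTop, 1 ≤ sigN μ X f N → ∃ Q : ℝ[X], Q.natDegree ≤ d ∧
      (∀ i, |Q.coeff i| ≤ Cb) ∧ IsEdgeworthApprox μ (S X f N) (meanS μ X f N) (sigN μ X f N)
        (ε * (sigN μ X f N)⁻¹ ^ r) Q := by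
  obtain ⟨d, Cb, P, hd, hCb, hP⟩ := hE
  refine ⟨d, r * Cb, fun ε hε => (eventually_atTop.2 (hP ε hε)).mono fun N hN hσ =>
    ⟨∑ b ∈ Finset.Icc 1 r, C ((sigN μ X f N)⁻¹ ^ b) * P b N, ?_, fun i => ?_,
      hσ, (integral_sq_S_sub_meanS_eq (measurable_S hX hf N)).le, fun k => ?_⟩⟩
  · exact natDegree_sum_le_of_forall_le _ _ fun b _ => (natDegree_C_mul_le _ _).trans (hd b N)
  · rw [finsetSum_coeff]
    refine (Finset.abs_sum_le_sum_abs _ _).trans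
      ((Finset.sum_le_card_nsmul _ _ Cb fun b _ => ?_).trans_eq (by simp))
    rw [coeff_C_mul, abs_mul, abs_of_nonneg (by positivity)]
    exact (mul_le_of_le_one_left (abs_nonneg _)
      (pow_le_one₀ (by positivity) (inv_le_one_of_one_le₀ hσ))).trans (hCb b N i)
  · simp only [eval_finsetSum, eval_mul, eval_C, Finset.sum_mul]
    exact hN k

lemma le_add_mul_inv_pow_of_exp_bounds {A L M c x y σ : ℝ} {D : ℕ} (hA : 0 ≤ A) (hL : 0 ≤ L)
    (hc : 0 < c) (hσ : 1 ≤ σ) (hD : L * (r / c) + r ≤ D) (hy : 0 ≤ y)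
    (hx : x ≤ Real.exp (c * (1 - M))) (hxy : x ≤ y + A * (Real.exp (L * M) * σ⁻¹ ^ D)) :
    x ≤ y + (A + Real.exp c) * σ⁻¹ ^ r := by
  have hσ0 : 0 < σ := by linarith
  have hlog := Real.log_nonneg hσ
  have hpow (n : ℕ) : σ⁻¹ ^ n = Real.exp (-(n * Real.log σ)) := by
    rw [Real.exp_neg, Real.exp_nat_mul, Real.exp_log hσ0, inv_pow]
  rcases le_total (r / c * Real.log σ) M with hM | hM
  · have hdecay : Real.exp (c * (1 - M)) ≤ Real.exp c * σ⁻¹ ^ r := by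
      rw [hpow, ← Real.exp_add, Real.exp_le_exp]
      have : c * (r / c * Real.log σ) = r * Real.log σ := by field_simp
      linarith [mul_le_mul_of_nonneg_left hM hc.le]
    linarith [mul_nonneg hA (by positivity : 0 ≤ σ⁻¹ ^ r)]
  · have hgrowth : Real.exp (L * M) * σ⁻¹ ^ D ≤ σ⁻¹ ^ r := by
      rw [hpow, hpow, ← Real.exp_add, Real.exp_le_exp]
      linarith [mul_le_mul_of_nonneg_left hM hL, mul_le_mul_of_nonneg_right hD hlog]
    linarith [mul_le_mul_of_nonneg_left hgrowth hA, mul_pos (Real.exp_pos c)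
      (by positivity : 0 < σ⁻¹ ^ r)]

lemma tendsto_sigN {E : Type*} {X : ℕ → Ω → E} {f : ℕ → E → ℤ}
    (hV : Tendsto (fun N => VN μ X f N) atTop atTop) :
    Tendsto (fun N => sigN μ X f N) atTop atTop :=
  Real.tendsto_sqrt_atTop.comp hV

lemma UEChain.exists_eventually_norm_complexCharFun_S_le (h : UEChain μ X κ C)
    (hf : ∀ n, Measurable (f n)) (hb : ∀ n ω, |f n (X n ω)| ≤ K)
    (hV : Tendsto (fun N => VN μ X f N) atTop atTop) (hE : Edgeworth μ X f r)
    (ht : Complex.exp (Complex.I * t) ≠ 1) :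
    ∃ A, 0 ≤ A ∧ ∀ ε > 0, ∀ᶠ N in atTop, ‖complexCharFun μ (S X f N) t‖ ≤
      A * (ε * sigN μ X f N + 1) * (sigN μ X f N)⁻¹ ^ r := by
  obtain ⟨δ, c, L, hδ, hc, hL, hM⟩ := h.exists_complexCharFun_S_bounds hf hb t
  have hX := h.2.1
  have := h.1
  obtain ⟨d, Cb, happrox⟩ := hE.exists_isEdgeworthApprox hX hf
  obtain ⟨A, hA0, hA⟩ := exists_norm_complexCharFun_le (Ω := Ω) ht (r + 1) d
    ⌈L * (r / c) + r⌉₊ Cb hδ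
  refine ⟨2 * A + Real.exp c, by positivity, fun ε hε => ?_⟩
  filter_upwards [happrox ε hε, (tendsto_sigN hV).eventually_ge_atTop 1,
    (tendsto_sigN hV).eventually_gt_atTop δ⁻¹] with N hQ hσ hδσ
  obtain ⟨Q, hd, hCb, hQ⟩ := hQ hσ
  obtain ⟨M, hratio, hdecay⟩ := hM N
  set σ := sigN μ X f N
  have hbound := hA μ (S X f N) _ σ _ _ Q (measurable_S hX hf N) ⟨_, abs_S_le hb N⟩ hQ hd hCb
    ((inv_lt_iff_one_lt_mul₀' hδ).1 hδσ) hratio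
  have hσr : σ * σ⁻¹ ^ (r + 1) = σ⁻¹ ^ r := by
    rw [pow_succ', mul_inv_cancel_left₀ (by linarith)]
  rw [hσr, mul_add A (_ + _)] at hbound
  calc ‖complexCharFun μ (S X f N) t‖
      ≤ A * (ε * σ⁻¹ ^ r * σ + σ⁻¹ ^ r) + (A + Real.exp c) * σ⁻¹ ^ r :=
        le_add_mul_inv_pow_of_exp_bounds hA0 hL hc hσ (Nat.le_ceil _) (by positivity) hdecay hbound
    _ = (A * (ε * σ) + (2 * A + Real.exp c)) * σ⁻¹ ^ r := by ring
    _ ≤ _ := by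
        gcongr
        nlinarith [mul_pos hε (by linarith : 0 < σ), Real.exp_pos c]

end PartialSums

theorem charFn_small_of_edgeworth_general
    (μ : Measure Ω) (X : ℕ → Ω → E) (κ : ℕ → Kernel E E) (f : ℕ → E → ℤ)
    (C : ℝ) (K r : ℕ) (hr : 1 ≤ r)
    (hchain : UEChain μ X κ C) (hf : ∀ n, Measurable (f n))
    (hbound : ∀ n ω, |f n (X n ω)| ≤ (K : ℤ))
    (hV : Tendsto (fun N => VN μ X f N) atTop atTop)
    (hEdge : Edgeworth μ X f r) :
    ∀ t : ℝ, Complex.exp (Complex.I * t) ≠ 1 →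
      ∀ ε > 0, ∃ N₀, ∀ N ≥ N₀,
        ‖∫ ω, Complex.exp (Complex.I * (t : ℂ) * ((S X f N ω : ℤ) : ℂ)) ∂μ‖
          ≤ ε * (sigN μ X f N)⁻¹ ^ (r - 1) := by
  intro t ht ε hε
  obtain ⟨A, hA0, hA⟩ :=
    hchain.exists_eventually_norm_complexCharFun_S_le hf hbound hV hEdge ht
  refine eventually_atTop.1 ?_
  filter_upwards [hA (ε / (2 * (A + 1))) (by positivity), (tendsto_sigN hV).eventually_gt_atTop 0,
    (tendsto_sigN hV).eventually_ge_atTop (2 * A / ε)] with N hN hσ hσA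
  obtain ⟨q, rfl⟩ := Nat.exists_eq_add_of_le' hr
  rw [Nat.add_sub_cancel]
  set σ := sigN μ X f N
  rw [div_le_iff₀ hε] at hσA
  have hεA : A * (ε / (2 * (A + 1))) ≤ ε / 2 := by
    rw [← mul_div_assoc, div_le_iff₀ (by positivity)]
    linarith
  calc _ ≤ A * (ε / (2 * (A + 1)) * σ + 1) * σ⁻¹ ^ (q + 1) := hN
    _ ≤ ε * σ * σ⁻¹ ^ (q + 1) :=
        mul_le_mul_of_nonneg_right (by linarith [mul_le_mul_of_nonneg_right hεA hσ.le])
          (by positivity)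
    _ = ε * σ⁻¹ ^ q := by rw [pow_succ', mul_assoc, mul_inv_cancel_left₀ hσ.ne']

lemma IsResonant.exp_I_mul_ne_one {K : ℕ} {t : ℝ} (h : IsResonant K t) (ht : t ≠ 0) :
    Complex.exp (Complex.I * t) ≠ 1 := by
  obtain ⟨l, m, hm, -, hlm, rfl⟩ := h
  have hl : l ≠ 0 := by
    rintro rfl
    simp at ht
  rw [Ne, Complex.exp_eq_one_iff]
  rintro ⟨n, hn⟩
  have hm0 : (m : ℂ) ≠ 0 := by exact_mod_cast hm.ne'
  have hpi : (2 * Real.pi * Complex.I : ℂ) ≠ 0 := Complex.two_pi_I_ne_zero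
  have hlnm : (l : ℂ) = n * m := by
    refine mul_left_cancel₀ hpi ?_
    push_cast at hn
    field_simp at hn ⊢
    linear_combination hn
  have hdvd : m ∣ l := Int.natCast_dvd_natCast.1 ⟨n, by rw [mul_comm]; exact_mod_cast hlnm⟩
  exact Nat.not_dvd_of_pos_of_lt (Nat.pos_of_ne_zero hl) hlm hdvd

/-- Theorem 2.3(i). If `S_N` obeys the usual Edgeworth expansion of order
`r`, then for every nonzero resonant point `t` one has `𝔼[e^{itS_N}] = o(σ_N^{-(r-1)})`. -/
theorem charFn_small_of_edgeworth
    (μ : Measure Ω) (X : ℕ → Ω → E) (κ : ℕ → Kernel E E) (f : ℕ → E → ℤ)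
    (C : ℝ) (K r : ℕ) (hC : 1 < C) (hK : 1 ≤ K) (hr : 1 ≤ r)
    (hchain : UEChain μ X κ C) (hf : ∀ n, Measurable (f n))
    (hbound : ∀ n ω, |f n (X n ω)| ≤ (K : ℤ))
    (hV : Tendsto (fun N => VN μ X f N) atTop atTop)
    (hEdge : Edgeworth μ X f r) :
    ∀ t : ℝ, IsResonant K t → t ≠ 0 →
      ∀ ε > 0, ∃ N₀, ∀ N ≥ N₀,
        ‖∫ ω, Complex.exp (Complex.I * (t : ℂ) * ((S X f N ω : ℤ) : ℂ)) ∂μ‖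
          ≤ ε * (sigN μ X f N)⁻¹ ^ (r - 1) := by
  intro t hres ht
  exact charFn_small_of_edgeworth_general μ X κ f C K r hr hchain hf hbound hV hEdge t
    (hres.exp_I_mul_ne_one ht)

end EdgeworthMC
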